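/- arXiv:math/0212267 — 5 statements merged into one kernel-verified Lean document; each statement's English description precedes it below -/
import Mathlib

section
/- For all integers n and k with n ≥ 4, 0 ≤ k ≤ n, n + k even, and n - k ≥ 6, the number of involutions of {1,2,…,n} with exactly k fixed points that contain the pattern 231 exactly once equals (k-1)·2^{(n-k-6)/2}·( C((n+k)/2 - 2, (n-k)/2 - 1) + 2·C((n+k)/2 - 3, (n-k)/2 - 1) + C((n+k)/2 - 4, (n-k)/2 - 1) ); when n + k is odd this number is 0. -/
/-- The number of fixed points of a permutation of `Fin n`. -/
def fixedPts {n : ℕ} (π : Equiv.Perm (Fin n)) : ℕ :=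
  (Finset.univ.filter fun i => π i = i).card

/-- A permutation is an involution if it is its own inverse. -/
def IsInvolution {n : ℕ} (π : Equiv.Perm (Fin n)) : Prop :=
  ∀ i, π (π i) = i

/-- The number of occurrences of the pattern 231 in a permutation of `Fin n`. -/
noncomputable def occ231 {n : ℕ} (π : Equiv.Perm (Fin n)) : ℕ :=
  Nat.card {t : Fin n × Fin n × Fin n //
    t.1 < t.2.1 ∧ t.2.1 < t.2.2 ∧ (π t.2.2 < π t.1 ∧ π t.1 < π t.2.1)}

/-- `i_n^k(∅;231)`: the number of involutions of `{1, …, n}` with exactly `k` fixed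
points containing the pattern 231 exactly once. -/
noncomputable def iCountOnce231 (n k : ℕ) : ℕ :=
  Nat.card {π : Equiv.Perm (Fin n) // IsInvolution π ∧ occ231 π = 1 ∧ fixedPts π = k}

namespace Inv231

def OS (s : ℕ) (h g : ℕ → ℕ) : ℕ → ℕ := fun i => if i < s then h i else g (i - s) + s

def Occ (f : ℕ → ℕ) (i j k : ℕ) : Prop := i < j ∧ j < k ∧ f k < f i ∧ f i < f j

def Inv (n : ℕ) (f : ℕ → ℕ) : Prop := (∀ i, f (f i) = i) ∧ ∀ i, n ≤ i → f i = i

def Av (f : ℕ → ℕ) : Prop := ∀ i j k, ¬ Occ f i j k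

def One (f : ℕ → ℕ) : Prop :=
  ∃ i j k, Occ f i j k ∧ ∀ i' j' k', Occ f i' j' k' → i' = i ∧ j' = j ∧ k' = k

def dec (m : ℕ) : ℕ → ℕ := fun i => m - i

def spec : ℕ → ℕ := fun i => if i = 0 then 3 else if i = 3 then 0 else i

theorem OS_lt {s : ℕ} {h g : ℕ → ℕ} {i : ℕ} (hi : i < s) : OS s h g i = h i := by
  simp [OS, hi]

theorem OS_ge {s : ℕ} {h g : ℕ → ℕ} {i : ℕ} (hi : s ≤ i) : OS s h g i = g (i - s) + s := by
  simp [OS, Nat.not_lt.mpr hi]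

theorem OS_add {s : ℕ} {h g : ℕ → ℕ} (i : ℕ) : OS s h g (i + s) = g i + s := by
  simp [OS]

theorem OS_inj (s : ℕ) (h : ℕ → ℕ) : Function.Injective (OS s h) := by
  intro g g' e
  funext i
  have := congrFun e (i + s)
  rw [OS_add, OS_add] at this
  omega

theorem OS_occ {s : ℕ} {h g : ℕ → ℕ} (hs : ∀ i < s, h i < s) (i j k : ℕ) :
    Occ (OS s h g) i j k ↔
      (k < s ∧ Occ h i j k) ∨ (s ≤ i ∧ Occ g (i - s) (j - s) (k - s)) := by
  unfold Occ
  constructor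
  · rintro ⟨h1, h2, h3, h4⟩
    rcases Nat.lt_or_ge i s with hi | hi
    · rcases Nat.lt_or_ge k s with hk | hk
      · left
        rw [OS_lt hi, OS_lt hk] at h3
        rw [OS_lt hi, OS_lt (by omega)] at h4
        exact ⟨hk, h1, h2, h3, h4⟩
      · rw [OS_lt hi, OS_ge hk] at h3
        have := hs i hi
        omega
    · right
      rw [OS_ge hi, OS_ge (by omega)] at h3 h4
      refine ⟨hi, ?_, ?_, ?_, ?_⟩ <;> omega
  · rintro (⟨hk, h1, h2, h3, h4⟩ | ⟨hi, h1, h2, h3, h4⟩)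
    · rw [OS_lt hk, OS_lt (show i < s by omega), OS_lt (show j < s by omega)]
      exact ⟨h1, h2, h3, h4⟩
    · rw [OS_ge hi, OS_ge (show s ≤ j by omega), OS_ge (show s ≤ k by omega)]
      refine ⟨?_, ?_, ?_, ?_⟩ <;> omega

theorem OS_occ_shift {s : ℕ} {h g : ℕ → ℕ} (hs : ∀ i < s, h i < s) {i j k : ℕ}
    (o : Occ g i j k) : Occ (OS s h g) (i + s) (j + s) (k + s) := by
  rw [OS_occ hs]
  right
  simpa using o

theorem OS_inv {s n : ℕ} {h g : ℕ → ℕ} (hs : ∀ i < s, h i < s) (hh : ∀ i < s, h (h i) = i)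
    (hg : Inv n g) : Inv (s + n) (OS s h g) := by
  constructor
  · intro i
    rcases Nat.lt_or_ge i s with hi | hi
    · rw [OS_lt hi, OS_lt (hs i hi), hh i hi]
    · rw [OS_ge hi, OS_add, hg.1]; omega
  · intro i hi
    rw [OS_ge (by omega), hg.2 _ (by omega)]; omega

theorem OS_exists {s n : ℕ} {h f : ℕ → ℕ} (hs : ∀ i < s, h i < s) (hf : Inv (s + n) f)
    (e : ∀ i < s, f i = h i) : ∃ g, Inv n g ∧ f = OS s h g := by
  have key : ∀ i, s ≤ i → s ≤ f i := by
    intro i hi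
    by_contra hc
    have h1 := e (f i) (by omega)
    rw [hf.1] at h1
    have := hs (f i) (by omega)
    omega
  refine ⟨fun i => f (i + s) - s, ⟨?_, ?_⟩, ?_⟩
  · intro i
    have := key (i + s) (by omega)
    show f (f (i + s) - s + s) - s = i
    rw [Nat.sub_add_cancel this, hf.1]; omega
  · intro i hi
    show f (i + s) - s = i
    rw [hf.2 _ (by omega)]; omega
  · funext i
    rcases Nat.lt_or_ge i s with hi | hi
    · rw [OS_lt hi, e i hi]
    · rw [OS_ge hi]
      have := key i hi
      show f i = f (i - s + s) - s + s
      rw [Nat.sub_add_cancel hi]; omega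

theorem dec_lt (m : ℕ) : ∀ i < m + 1, dec m i < m + 1 := by
  intro i hi; unfold dec; omega

theorem dec_dec (m : ℕ) : ∀ i < m + 1, dec m (dec m i) = i := by
  intro i hi; unfold dec; omega

theorem spec_lt : ∀ i < 4, spec i < 4 := by decide

theorem spec_spec : ∀ i < 4, spec (spec i) = i := by decide

theorem dec_occ (m : ℕ) {i j k : ℕ} : ¬ Occ (dec m) i j k := by
  unfold Occ dec; omega

theorem spec_occ {i j k : ℕ} (hk : k < 4) : Occ spec i j k ↔ i = 1 ∧ j = 2 ∧ k = 3 := by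
  constructor
  · rintro ⟨h1, h2, h3, h4⟩
    unfold spec at h3 h4
    have : i < 4 := by omega
    have : j < 4 := by omega
    interval_cases k <;> interval_cases j <;> interval_cases i <;> simp_all
  · rintro ⟨rfl, rfl, rfl⟩
    unfold Occ spec; simp

theorem Av_dec (m : ℕ) (g : ℕ → ℕ) : Av (OS (m + 1) (dec m) g) ↔ Av g := by
  constructor
  · intro h i j k o
    exact h _ _ _ (OS_occ_shift (dec_lt m) o)
  · intro h i j k o
    rcases (OS_occ (dec_lt m) _ _ _).1 o with ⟨_, o⟩ | ⟨_, o⟩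
    · exact dec_occ m o
    · exact h _ _ _ o

theorem One_dec (m : ℕ) (g : ℕ → ℕ) : One (OS (m + 1) (dec m) g) ↔ One g := by
  constructor
  · rintro ⟨i, j, k, o, hu⟩
    rcases (OS_occ (dec_lt m) _ _ _).1 o with ⟨_, o'⟩ | ⟨_, o'⟩
    · exact (dec_occ m o').elim
    · refine ⟨_, _, _, o', ?_⟩
      intro i' j' k' o2
      have := hu _ _ _ (OS_occ_shift (dec_lt m) o2)
      omega
  · rintro ⟨i, j, k, o, hu⟩
    refine ⟨_, _, _, OS_occ_shift (dec_lt m) o, ?_⟩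
    intro i' j' k' o2
    rcases (OS_occ (dec_lt m) _ _ _).1 o2 with ⟨_, o'⟩ | ⟨hi, o'⟩
    · exact (dec_occ m o').elim
    · have := hu _ _ _ o'
      have h1 := o2.1
      have h2 := o2.2.1
      omega

theorem One_spec (g : ℕ → ℕ) : One (OS 4 spec g) ↔ Av g := by
  have o0 : Occ (OS 4 spec g) 1 2 3 := by
    rw [OS_occ spec_lt]; left
    exact ⟨by omega, (spec_occ (by omega)).2 ⟨rfl, rfl, rfl⟩⟩
  constructor
  · rintro ⟨i, j, k, o, hu⟩ i' j' k' o'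
    have h1 := hu _ _ _ o0
    have h2 := hu _ _ _ (OS_occ_shift spec_lt o')
    omega
  · intro h
    refine ⟨1, 2, 3, o0, ?_⟩
    intro i j k o
    rcases (OS_occ spec_lt _ _ _).1 o with ⟨hk, o'⟩ | ⟨_, o'⟩
    · exact (spec_occ hk).1 o'
    · exact (h _ _ _ o').elim

/-- strictly decreasing self-maps of an initial segment are the reversal -/
theorem dec_of_anti {f : ℕ → ℕ} {m : ℕ} (h1 : ∀ i ≤ m, f i ≤ m)
    (h2 : ∀ i j, i < j → j ≤ m → f j < f i) : ∀ i < m + 1, f i = dec m i := by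
  have ub : ∀ i ≤ m, f i + i ≤ m := by
    intro i
    induction i with
    | zero => intro h; have := h1 0 h; omega
    | succ i ih =>
      intro h
      have := ih (by omega)
      have := h2 i (i + 1) (by omega) h
      omega
  have lb : ∀ d ≤ m, d ≤ f (m - d) := by
    intro d
    induction d with
    | zero => intro h; omega
    | succ d ih =>
      intro h
      have := ih (by omega)
      have := h2 (m - (d + 1)) (m - d) (by omega) (by omega)
      omega
  intro i hi
  have a := ub i (by omega)
  have b := lb (m - i) (by omega)
  rw [show m - (m - i) = i by omega] at b
  unfold dec; omega

theorem inv_inj {n : ℕ} {f : ℕ → ℕ} (hf : Inv n f) {i j : ℕ} (h : f i = f j) : i = j := by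
  rw [← hf.1 i, h, hf.1]

theorem f0_lt {n : ℕ} {f : ℕ → ℕ} (hf : Inv (n + 1) f) : f 0 < n + 1 := by
  by_contra h
  have h1 := hf.2 (f 0) (by omega)
  rw [hf.1] at h1
  omega

theorem struct_gen {n : ℕ} {f : ℕ → ℕ} (hf : Inv n f)
    (pres : ∀ i, i < f 0 → f i ≤ f 0)
    (anti : ∀ i j, 0 < i → i < j → j < f 0 → f j < f i) :
    ∀ i < f 0 + 1, f i = dec (f 0) i := by
  have h0 := hf.1 0
  apply dec_of_anti
  · intro i hi
    rcases Nat.lt_or_ge i (f 0) with h | h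
    · exact pres i h
    · rw [show i = f 0 by omega, h0]; omega
  · intro i j hij hj
    rcases Nat.lt_or_ge j (f 0) with h | h
    · rcases Nat.eq_zero_or_pos i with h' | h'
      · subst h'
        have := pres j h
        rcases Nat.lt_or_ge (f j) (f 0) with h3 | h3
        · exact h3
        · have := inv_inj hf (show f j = f 0 by omega)
          omega
      · exact anti i j h' hij h
    · have hj' : j = f 0 := by omega
      rw [hj', h0]
      rcases Nat.eq_zero_or_pos (f i) with h3 | h3
      · have := inv_inj hf (h3.trans h0.symm); omega
      · exact h3

theorem struct_Av {n : ℕ} {f : ℕ → ℕ} (hf : Inv n f) (ha : Av f) :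
    ∀ i < f 0 + 1, f i = dec (f 0) i := by
  have h0 := hf.1 0
  apply struct_gen hf
  · intro i hi
    by_contra hc
    have : i ≠ 0 := by rintro rfl; omega
    exact ha 0 i (f 0) ⟨by omega, hi, by omega, by omega⟩
  · intro i j hi hij hj
    by_contra hc
    have h1 : f i ≠ f j := fun h => by have := inv_inj hf h; omega
    have h2 : f i ≠ f (f 0) := fun h => by have := inv_inj hf h; omega
    exact ha i j (f 0) ⟨hij, hj, by omega, by omega⟩

theorem struct_One {n : ℕ} {f : ℕ → ℕ} (hf : Inv n f) (ha : One f) :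
    (∀ i < f 0 + 1, f i = dec (f 0) i) ∨ (f 0 = 3 ∧ ∀ i < 4, f i = spec i) := by
  have h0 := hf.1 0
  obtain ⟨a, b, c, o, hu⟩ := ha
  have uniq : ∀ i j k i' j' k', Occ f i j k → Occ f i' j' k' → i = i' ∧ j = j' ∧ k = k' := by
    intro i j k i' j' k' h1 h2
    have := hu _ _ _ h1
    have := hu _ _ _ h2
    omega
  have pres : ∀ i, i < f 0 → f i ≤ f 0 := by
    intro i hi
    by_contra hc
    have : i ≠ 0 := by rintro rfl; omega
    have hi' := hf.1 i
    have := uniq 0 i (f 0) 0 i (f i) ⟨by omega, hi, by omega, by omega⟩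
      ⟨by omega, by omega, by omega, by omega⟩
    omega
  by_cases anti : ∀ i j, 0 < i → i < j → j < f 0 → f j < f i
  · exact Or.inl (struct_gen hf pres anti)
  right
  push Not at anti
  obtain ⟨i, j, hi, hij, hj, hle⟩ := anti
  have ne : ∀ {x y}, x ≠ y → f x ≠ f y := fun h h' => h (inv_inj hf h')
  have bnd : ∀ x, 0 < x → x < f 0 → 0 < f x ∧ f x < f 0 := by
    intro x hx hx'
    have h1 := pres x hx'
    have h2 := ne (show x ≠ 0 by omega)
    have h3 := ne (show x ≠ f 0 by omega)
    omega
  have occ : ∀ x y, 0 < x → x < y → y < f 0 → f x < f y → Occ f x y (f 0) := by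
    intro x y hx hxy hy h
    have := bnd x hx (by omega)
    exact ⟨hxy, hy, by omega, h⟩
  have hlt : f i < f j := lt_of_le_of_ne hle (ne (by omega))
  have o1 := occ i j hi hij hj hlt
  have bi := bnd i hi (by omega)
  have bj := bnd j (by omega) hj
  have ii := hf.1 i
  have jj := hf.1 j
  have o2 := occ (f i) (f j) bi.1 hlt bj.2 (by omega)
  have e := uniq _ _ _ _ _ _ o1 o2
  have ei : f i = i := e.1.symm
  have ej : f j = j := e.2.1.symm
  -- any other inner pair is an inversion
  have oth : ∀ x y, 0 < x → x < y → y < f 0 → (x = i ∧ y = j) ∨ f y < f x := by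
    intro x y hx hxy hy
    by_contra hc
    have h1 := ne (show x ≠ y by omega)
    have := uniq _ _ _ _ _ _ o1 (occ x y hx hxy hy (by omega))
    omega
  have small : ∀ x, 0 < x → x < f 0 → x = i ∨ x = j := by
    intro x hx hx'
    by_contra hc
    have bx := bnd x hx hx'
    have xx := hf.1 x
    rcases lt_trichotomy x i with h | h | h
    · have h1 := oth x j hx (by omega) hj
      -- `f x > j`
      have := uniq _ _ _ _ _ _ o1 (show Occ f i j (f x) from ⟨hij, by omega, by omega, hlt⟩)
      omega
    · omega
    · have h1 := oth i x hi h hx'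
      rcases lt_trichotomy x j with h2 | h2 | h2
      · have h3 := oth x j hx h2 hj
        omega
      · omega
      · have := uniq _ _ _ _ _ _ o1 (show Occ f i j x from ⟨hij, h2, by omega, hlt⟩)
        omega
  have s1 := small 1 (by omega) (by omega)
  have s2 := small 2 (by omega) (by omega)
  have i1 : i = 1 := by omega
  have j2 : j = 2 := by omega
  have m3 : f 0 = 3 := by
    by_contra hc
    have s3 := small 3 (by omega) (by omega)
    omega
  refine ⟨m3, ?_⟩
  subst i1 j2
  rw [m3] at h0
  intro x hx
  interval_cases x
  exacts [m3, ei, ej, h0]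

end Inv231

namespace Inv231
open Finset Polynomial

noncomputable def PS : ℕ → Finset (ℕ → ℕ)
  | 0 => {id}
  | n + 1 => open Classical in
    (univ : Finset (Fin (n + 1))).biUnion fun m => (PS (n - m)).image (OS (m + 1) (dec m))
  termination_by n => n
  decreasing_by omega

noncomputable def QS : ℕ → Finset (ℕ → ℕ)
  | 0 => ∅
  | n + 1 => open Classical in
    ((univ : Finset (Fin (n + 1))).biUnion fun m => (QS (n - m)).image (OS (m + 1) (dec m))) ∪
      (if 3 ≤ n then (PS (n - 3)).image (OS 4 spec) else ∅)
  termination_by n => n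
  decreasing_by omega

theorem inv_zero {f : ℕ → ℕ} (hf : Inv 0 f) : f = id := by
  funext i
  exact hf.2 i (by omega)

theorem id_occ {i j k : ℕ} : ¬ Occ id i j k := by
  unfold Occ; simp only [id]; omega

theorem mem_PS (n : ℕ) : ∀ f, f ∈ PS n ↔ Inv n f ∧ Av f := by
  induction n using Nat.strong_induction_on with
  | _ n ih =>
  intro f
  rcases n with _ | n
  · rw [PS, mem_singleton]
    constructor
    · rintro rfl
      exact ⟨⟨fun _ => rfl, fun _ _ => rfl⟩, fun i j k => id_occ⟩
    · rintro ⟨h, _⟩; exact inv_zero h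
  · rw [PS]
    simp only [mem_biUnion, mem_univ, true_and, mem_image]
    constructor
    · rintro ⟨m, g, hg, rfl⟩
      have hm := m.2
      rw [ih _ (by omega)] at hg
      refine ⟨?_, (Av_dec _ _).2 hg.2⟩
      have := OS_inv (dec_lt m) (dec_dec m) hg.1
      rwa [show (m : ℕ) + 1 + (n - m) = n + 1 by omega] at this
    · rintro ⟨hf, ha⟩
      have h0 := f0_lt hf
      have hs := struct_Av hf ha
      rw [show n + 1 = f 0 + 1 + (n - f 0) by omega] at hf
      obtain ⟨g, hg, e⟩ := OS_exists (dec_lt _) hf hs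
      refine ⟨⟨f 0, h0⟩, g, ?_, e.symm⟩
      rw [ih _ (by simp only []; omega)]
      rw [e] at ha
      exact ⟨hg, (Av_dec _ _).1 ha⟩

theorem mem_QS (n : ℕ) : ∀ f, f ∈ QS n ↔ Inv n f ∧ One f := by
  induction n using Nat.strong_induction_on with
  | _ n ih =>
  intro f
  classical
  rcases n with _ | n
  · rw [QS]
    simp only [notMem_empty, false_iff]
    rintro ⟨h, i, j, k, o, _⟩
    rw [inv_zero h] at o
    exact id_occ o
  · rw [QS]
    simp only [mem_union, mem_biUnion, mem_univ, true_and, mem_image]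
    constructor
    · rintro (⟨m, g, hg, rfl⟩ | h)
      · have hm := m.2
        rw [ih _ (by omega)] at hg
        refine ⟨?_, (One_dec _ _).2 hg.2⟩
        have := OS_inv (dec_lt m) (dec_dec m) hg.1
        rwa [show (m : ℕ) + 1 + (n - m) = n + 1 by omega] at this
      · split_ifs at h with hn
        · obtain ⟨g, hg, rfl⟩ := mem_image.1 h
          rw [mem_PS] at hg
          refine ⟨?_, (One_spec _).2 hg.2⟩
          have := OS_inv spec_lt spec_spec hg.1
          rwa [show 4 + (n - 3) = n + 1 by omega] at this
        · simp at h
    · rintro ⟨hf, ha⟩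
      have h0 := f0_lt hf
      rcases struct_One hf ha with hs | ⟨h3, hs⟩
      · left
        rw [show n + 1 = f 0 + 1 + (n - f 0) by omega] at hf
        obtain ⟨g, hg, e⟩ := OS_exists (dec_lt _) hf hs
        refine ⟨⟨f 0, h0⟩, g, ?_, e.symm⟩
        rw [ih _ (by simp only []; omega)]
        rw [e] at ha
        exact ⟨hg, (One_dec _ _).1 ha⟩
      · right
        rw [if_pos (by omega)]
        rw [show n + 1 = 4 + (n - 3) by omega] at hf
        obtain ⟨g, hg, e⟩ := OS_exists spec_lt hf hs
        rw [e] at ha ⊢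
        exact mem_image_of_mem _ ((mem_PS _ _).2 ⟨hg, (One_spec _).1 ha⟩)

def F (n : ℕ) (f : ℕ → ℕ) : ℕ := ∑ i ∈ range n, if f i = i then 1 else 0

theorem F_OS (s n : ℕ) (h g : ℕ → ℕ) : F (s + n) (OS s h g) = F s h + F n g := by
  unfold F
  rw [sum_range_add]
  congr 1
  · apply sum_congr rfl
    intro i hi
    rw [OS_lt (mem_range.1 hi)]
  · apply sum_congr rfl
    intro i hi
    rw [add_comm s i, OS_add]
    simp

theorem F_dec (m : ℕ) : F (m + 1) (dec m) = (m + 1) % 2 := by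
  unfold F
  rcases Nat.even_or_odd' m with ⟨c, h | h⟩
  · have : ∀ i ∈ range (m + 1), (if dec m i = i then 1 else 0) = if i = c then 1 else 0 := by
      intro i hi
      have := mem_range.1 hi
      congr 1
      unfold dec
      apply propext
      omega
    rw [sum_congr rfl this, sum_ite_eq', if_pos (mem_range.2 (by omega))]
    omega
  · have : ∀ i ∈ range (m + 1), (if dec m i = i then 1 else 0) = 0 := by
      intro i hi
      have := mem_range.1 hi
      rw [if_neg]
      unfold dec
      omega
    rw [sum_congr rfl this]
    simp only [sum_const_zero]
    omega

theorem F_spec : F 4 spec = 2 := by decide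

noncomputable def wP (n : ℕ) : ℤ[X] := ∑ f ∈ PS n, X ^ F n f
noncomputable def wQ (n : ℕ) : ℤ[X] := ∑ f ∈ QS n, X ^ F n f

theorem OS_zero {s : ℕ} {h g : ℕ → ℕ} (hs : 0 < s) : OS s h g 0 = h 0 := OS_lt hs

theorem sum_dec (n : ℕ) (T : ℕ → Finset (ℕ → ℕ)) [DecidableEq (ℕ → ℕ)] :
    ∑ f ∈ (univ : Finset (Fin (n + 1))).biUnion fun m => (T (n - m)).image (OS (m + 1) (dec m)),
      (X : ℤ[X]) ^ F (n + 1) f =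
    ∑ m ∈ range (n + 1), X ^ ((m + 1) % 2) * ∑ f ∈ T (n - m), X ^ F (n - m) f := by
  rw [sum_biUnion, Finset.sum_range]
  · apply sum_congr rfl
    intro m _
    have hm := m.2
    rw [sum_image (fun a _ b _ h => OS_inj _ _ h), mul_sum]
    apply sum_congr rfl
    intro g _
    have := F_OS (m + 1) (n - m) (dec m) g
    rw [show (m : ℕ) + 1 + (n - m) = n + 1 by omega, F_dec] at this
    rw [this, pow_add]
  · intro a _ b _ hab
    rw [Function.onFun, disjoint_left]
    intro f h1 h2
    obtain ⟨g1, _, rfl⟩ := mem_image.1 h1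
    obtain ⟨g2, _, e⟩ := mem_image.1 h2
    have := congrFun e 0
    rw [OS_zero (by omega), OS_zero (by omega)] at this
    unfold dec at this
    apply hab
    ext
    omega

theorem wP_zero : wP 0 = 1 := by
  simp [wP, PS, F]

theorem wP_succ (n : ℕ) :
    wP (n + 1) = ∑ m ∈ range (n + 1), X ^ ((m + 1) % 2) * wP (n - m) := by
  classical
  unfold wP
  rw [PS]
  convert sum_dec n PS

theorem wQ_zero : wQ 0 = 0 := by
  simp [wQ, QS]

theorem wQ_succ (n : ℕ) :
    wQ (n + 1) = ∑ m ∈ range (n + 1), X ^ ((m + 1) % 2) * wQ (n - m) +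
      if 3 ≤ n then X ^ 2 * wP (n - 3) else 0 := by
  classical
  unfold wQ
  rw [QS, sum_union]
  · congr 1
    · convert sum_dec n QS
    · split_ifs with hn
      · rw [sum_image (fun a _ b _ h => OS_inj _ _ h), wP, mul_sum]
        apply sum_congr rfl
        intro g _
        have := F_OS 4 (n - 3) spec g
        rw [show 4 + (n - 3) = n + 1 by omega, F_spec] at this
        rw [this, pow_add]
      · simp
  · rw [disjoint_left]
    intro f h1 h2
    split_ifs at h2 with hn
    · obtain ⟨m, _, h1⟩ := mem_biUnion.1 h1
      obtain ⟨g1, _, rfl⟩ := mem_image.1 h1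
      obtain ⟨g2, _, e⟩ := mem_image.1 h2
      have h0 := congrFun e 0
      rw [OS_zero (by omega), OS_zero (by omega)] at h0
      have hm : (m : ℕ) = 3 := by
        have : spec 0 = 3 := rfl
        unfold dec at h0
        omega
      have h1 := congrFun e 1
      rw [hm, OS_lt (by omega), OS_lt (by omega)] at h1
      have : spec 1 = 1 := rfl
      unfold dec at h1
      omega
    · simp at h2

theorem rec_aux (w : ℕ → ℤ[X]) (n : ℕ) :
    ∑ m ∈ range (n + 2 + 1), X ^ ((m + 1) % 2) * w (n + 2 - m) =
      ∑ m ∈ range (n + 1), X ^ ((m + 1) % 2) * w (n - m) + w (n + 1) + X * w (n + 2) := by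
  rw [sum_range_succ', sum_range_succ']
  congr 1
  · congr 1
    · apply sum_congr rfl
      intro m _
      rw [show (m + 1 + 1 + 1) % 2 = (m + 1) % 2 by omega,
        show n + 2 - (m + 1 + 1) = n - m by omega]
    · simp
  · simp

theorem wP_one : wP 1 = X := by
  rw [wP_succ]; simp [wP_zero]

theorem wP_two : wP 2 = X ^ 2 + 1 := by
  rw [wP_succ]; simp [wP_zero, wP_one, sum_range_succ]; ring

theorem wP_rec (n : ℕ) : wP (n + 3) = X * wP (n + 2) + 2 * wP (n + 1) := by
  have h := wP_succ (n + 2)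
  rw [rec_aux, ← wP_succ] at h
  rw [h]; ring

theorem wQ_rec (n : ℕ) : wQ (n + 3) = X * wQ (n + 2) + 2 * wQ (n + 1) +
    ((if 1 ≤ n then X ^ 2 * wP (n - 1) else 0) - if 3 ≤ n then X ^ 2 * wP (n - 3) else 0) := by
  have h := wQ_succ (n + 2)
  have h1 := wQ_succ n
  rw [rec_aux] at h
  rw [show n + 3 = n + 2 + 1 by rfl, h, show n + 2 - 3 = n - 1 by omega]
  simp only [show 3 ≤ n + 2 ↔ 1 ≤ n by omega]
  linear_combination -h1

theorem wQ_small : wQ 1 = 0 ∧ wQ 2 = 0 := by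
  have h1 : wQ 1 = 0 := by rw [wQ_succ]; simp [wQ_zero]
  refine ⟨h1, ?_⟩
  rw [wQ_succ]; simp [wQ_zero, h1, sum_range_succ]

end Inv231

namespace Inv231
open Finset Polynomial

theorem wP_bad (n : ℕ) : ∀ k, (n < k ∨ (n + k) % 2 = 1) → (wP n).coeff k = 0 := by
  induction n using Nat.strong_induction_on with
  | _ n ih =>
  intro k hk
  rcases n with _ | _ | _ | n
  · rw [wP_zero, coeff_one, if_neg (by omega)]
  · rw [zero_add, wP_one, coeff_X, if_neg (by omega)]
  · rw [zero_add, wP_two, coeff_add, coeff_X_pow, coeff_one, if_neg (by omega), if_neg (by omega)]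
    rfl
  · rw [wP_rec, coeff_add, coeff_ofNat_mul, ih (n + 1) (by omega) k (by omega)]
    rcases k with _ | k
    · simp
    · rw [coeff_X_mul, ih (n + 2) (by omega) k (by omega)]; simp

theorem wQ_bad (n : ℕ) : ∀ k, (n < k + 2 ∨ (n + k) % 2 = 1 ∨ k < 2) → (wQ n).coeff k = 0 := by
  induction n using Nat.strong_induction_on with
  | _ n ih =>
  intro k hk
  rcases n with _ | _ | _ | n
  · rw [wQ_zero]; simp
  · rw [zero_add, wQ_small.1]; simp
  · rw [zero_add, wQ_small.2]; simp
  · have hX : ∀ j, (n < j + 3 ∧ j ≤ n ∧ 1 ≤ j ∨ True) → ∀ j ≤ n, (X ^ 2 * wP (n - j)).coeff k = 0 ∨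
        ¬ (j = 1 ∨ j = 3) := by
      intro _ _ j hj
      by_cases hj' : j = 1 ∨ j = 3
      · left
        rcases k with _ | _ | k
        · rw [coeff_X_pow_mul']; simp
        · rw [coeff_X_pow_mul']; simp
        · rw [coeff_X_pow_mul, wP_bad _ _ (by omega)]
      · right; exact hj'
    have e1 : (if 1 ≤ n then X ^ 2 * wP (n - 1) else 0 : ℤ[X]).coeff k = 0 := by
      split_ifs with h
      · rcases hX 0 (Or.inr trivial) 1 h with h | h
        · exact h
        · omega
      · simp
    have e2 : (if 3 ≤ n then X ^ 2 * wP (n - 3) else 0 : ℤ[X]).coeff k = 0 := by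
      split_ifs with h
      · rcases hX 0 (Or.inr trivial) 3 h with h | h
        · exact h
        · omega
      · simp
    rw [wQ_rec, coeff_add, coeff_sub, e1, e2, coeff_add, coeff_ofNat_mul,
      ih (n + 1) (by omega) k (by omega)]
    rcases k with _ | k
    · simp
    · rw [coeff_X_mul, ih (n + 2) (by omega) k (by omega)]; simp

theorem p_zero (a : ℕ) : (wP a).coeff a = 1 := by
  induction a using Nat.strong_induction_on with
  | _ a ih =>
  rcases a with _ | _ | _ | a
  · simp [wP_zero]
  · simp [wP_one]
  · simp [wP_two, coeff_one]
  · rw [wP_rec, coeff_add, coeff_ofNat_mul, coeff_X_mul, ih _ (by omega), wP_bad _ _ (by omega)]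
    simp

theorem p_step (a b : ℕ) : (wP (a + 1 + 2 * (b + 1))).coeff (a + 1) =
    (wP (a + 2 * (b + 1))).coeff a + 2 * (wP (a + 1 + 2 * b)).coeff (a + 1) := by
  rw [show a + 1 + 2 * (b + 1) = a + 2 * b + 3 by ring, wP_rec, coeff_add, coeff_X_mul,
    coeff_ofNat_mul]
  congr 3 <;> ring_nf

theorem p_succ (b : ℕ) : ∀ a, (wP (a + 2 * (b + 1))).coeff a =
    2 ^ b * (2 * ((a + b + 1).choose (b + 1) : ℤ) - ((a + b).choose b : ℤ)) := by
  induction b with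
  | zero =>
    intro a
    induction a with
    | zero => simp [wP_two]
    | succ a ih =>
      rw [p_step, ih, mul_zero, add_zero (a + 1), p_zero]
      simp; ring
  | succ b ihb =>
    intro a
    induction a with
    | zero =>
      have := ihb 0
      rw [show 0 + 2 * (b + 1 + 1) = 2 * b + 1 + 3 by ring, wP_rec, coeff_add, coeff_X_mul_zero,
        coeff_ofNat_mul, show 2 * b + 1 + 1 = 0 + 2 * (b + 1) by ring, this]
      simp; ring
    | succ a ih =>
      rw [p_step, ih, ihb]
      have h1 : ((a + 1 + (b + 1) + 1).choose (b + 1 + 1) : ℤ) =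
        (a + (b + 1) + 1).choose (b + 1) + (a + (b + 1) + 1).choose (b + 1 + 1) := by
        rw [show a + 1 + (b + 1) + 1 = (a + (b + 1) + 1) + 1 by ring, Nat.choose_succ_succ]
        push_cast; ring
      have h2 : ((a + 1 + (b + 1)).choose (b + 1) : ℤ) =
        (a + (b + 1)).choose b + (a + (b + 1)).choose (b + 1) := by
        rw [show a + 1 + (b + 1) = (a + (b + 1)) + 1 by ring, Nat.choose_succ_succ]
        push_cast; ring
      rw [h1, h2, show a + 1 + b + 1 = a + (b + 1) + 1 by ring,
        show a + 1 + b = a + (b + 1) by ring]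
      ring

theorem q_one (a : ℕ) : (wQ (a + 2 + 2 * 1)).coeff (a + 2) = a + 1 := by
  induction a with
  | zero =>
    rw [show 0 + 2 + 2 * 1 = 1 + 3 by rfl, wQ_rec]
    simp only [le_refl, if_true]
    rw [if_neg (by omega), coeff_add, coeff_sub, coeff_add, coeff_ofNat_mul, coeff_X_mul,
      coeff_X_pow_mul, wQ_bad _ _ (by omega), wQ_bad _ _ (by omega), wP_zero]
    simp
  | succ a ih =>
    have e2 : (if 3 ≤ a + 2 then X ^ 2 * wP (a + 2 - 3) else 0 : ℤ[X]).coeff (a + 1 + 2) = 0 := by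
      split_ifs
      · rw [coeff_X_pow_mul, wP_bad _ _ (by omega)]
      · simp
    rw [show a + 1 + 2 + 2 * 1 = (a + 2) + 3 by ring, wQ_rec, if_pos (by omega), coeff_add,
      coeff_sub, e2, coeff_X_pow_mul, coeff_add, coeff_ofNat_mul,
      wQ_bad (a + 2 + 1) _ (by omega), show a + 1 + 2 = (a + 2) + 1 by ring, coeff_X_mul, ih,
      show a + 2 - 1 = a + 1 by omega, p_zero]
    push_cast; ring

theorem q_step (a b : ℕ) : (wQ (a + 2 + 2 * (b + 2))).coeff (a + 2) =
    (wQ (a + 1 + 2 * (b + 2))).coeff (a + 1) + 2 * (wQ (a + 2 + 2 * (b + 1))).coeff (a + 2) +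
      ((wP (a + 2 * (b + 1))).coeff a - (wP (a + 2 * b)).coeff a) := by
  rw [show a + 2 + 2 * (b + 2) = a + 2 * b + 3 + 3 by ring, wQ_rec, if_pos (by omega),
    if_pos (by omega), coeff_add, coeff_sub, coeff_add, coeff_X_pow_mul, coeff_X_pow_mul,
    coeff_ofNat_mul, coeff_X_mul, show a + 2 * b + 3 - 1 = a + 2 * (b + 1) by omega,
    show a + 2 * b + 3 - 3 = a + 2 * b by omega]
  congr 3 <;> ring_nf

theorem q_two (a : ℕ) : (wQ (a + 2 + 2 * 2)).coeff (a + 2) = 2 * ((a : ℤ) + 1) ^ 2 := by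
  have key : ∀ a, (wQ (a + 2 + 2 * 2)).coeff (a + 2) = (wQ (a + 1 + 2 * 2)).coeff (a + 1) +
      2 * ((a : ℤ) + 1) + (2 * a : ℤ) := by
    intro a
    have h := q_step a 0
    rw [show 0 + 1 = 1 by rfl, show 0 + 2 = 2 by rfl, q_one, mul_zero, add_zero, p_zero] at h
    have h2 := p_succ 0 a
    rw [zero_add] at h2
    rw [h, h2]
    simp; ring
  induction a with
  | zero =>
    rw [key, wQ_bad _ _ (by omega)]; simp
  | succ a ih =>
    rw [key, show a + 1 + 1 = a + 2 by ring, ih]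
    push_cast; ring

theorem q_main (b : ℕ) : ∀ a, (wQ (a + 2 + 2 * (b + 3))).coeff (a + 2) =
    ((a : ℤ) + 1) * 2 ^ b * (4 * ((a + b + 2).choose (b + 2) : ℤ) + ((a + b + 1).choose b : ℤ)) := by
  -- the difference in `a`
  have pas : ∀ x y : ℕ, ((x + 1).choose (y + 1) : ℤ) = x.choose y + x.choose (y + 1) := by
    intro x y; rw [Nat.choose_succ_succ]; push_cast; rfl
  induction b with
  | zero =>
    intro a
    have key : ∀ a, (wQ (a + 2 + 2 * 3)).coeff (a + 2) = (wQ (a + 1 + 2 * 3)).coeff (a + 1) +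
        2 * (2 * ((a : ℤ) + 1) ^ 2) +
        (2 * (2 * ((a + 2).choose 2 : ℤ) - (a + 1)) - (2 * (a + 1) - 1)) := by
      intro a
      have h := q_step a 1
      rw [show 1 + 1 = 2 by rfl, show 1 + 2 = 3 by rfl, q_two] at h
      have h1 := p_succ 0 a
      have h2 := p_succ 1 a
      rw [zero_add] at h1
      rw [show 1 + 1 = 2 by rfl] at h2
      rw [h, h1, h2]
      simp
    simp only [zero_add, add_zero, Nat.choose_zero_right]
    induction a with
    | zero => rw [key, wQ_bad _ _ (by omega)]; simp
    | succ a ih =>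
      rw [key, show a + 1 + 1 = a + 2 by ring, ih, show a + 1 + 2 = a + 2 + 1 by ring, pas (a + 2) 1]
      have : ((a + 2).choose 1 : ℤ) = a + 2 := by simp
      rw [this]
      push_cast; ring
  | succ b ihb =>
    intro a
    have key : ∀ a, (wQ (a + 2 + 2 * (b + 1 + 3))).coeff (a + 2) =
        (wQ (a + 1 + 2 * (b + 1 + 3))).coeff (a + 1) +
        2 * (((a : ℤ) + 1) * 2 ^ b *
          (4 * ((a + b + 2).choose (b + 2) : ℤ) + ((a + b + 1).choose b : ℤ))) +
        (2 ^ (b + 2) * (2 * ((a + b + 3).choose (b + 3) : ℤ) - (a + b + 2).choose (b + 2)) -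
          2 ^ (b + 1) * (2 * ((a + b + 2).choose (b + 2) : ℤ) - (a + b + 1).choose (b + 1))) := by
      intro a
      have h := q_step a (b + 2)
      rw [show b + 2 + 1 = b + 3 by ring, ihb] at h
      have h1 := p_succ (b + 1) a
      have h2 := p_succ (b + 2) a
      rw [show b + 1 + 1 = b + 2 by ring] at h1
      rw [show b + 2 + 1 = b + 3 by ring] at h2
      rw [show b + 1 + 3 = b + 2 + 2 by ring, h, h1, h2]
      rfl
    induction a with
    | zero =>
      rw [key, wQ_bad _ _ (by omega)]
      have e : ((b + 2).choose (b + 1) : ℤ) = b + 2 := by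
        rw [show b + 2 = b + 1 + 1 by ring, Nat.choose_succ_self_right]; push_cast; ring
      have e' : ((b + 1).choose b : ℤ) = b + 1 := by
        rw [Nat.choose_succ_self_right]; push_cast; ring
      simp only [zero_add, Nat.choose_self, Nat.cast_zero, show b + 1 + 1 = b + 2 by ring,
        show b + 1 + 2 = b + 3 by ring, e, e']
      push_cast; ring
    | succ a ih =>
      rw [key, show a + 1 + 1 = a + 2 by ring, ih]
      have e1 := pas (a + b + 3) (b + 2)
      have e2 := pas (a + b + 2) b
      simp only [show a + 1 + b + 3 = a + b + 3 + 1 by ring,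
        show a + 1 + b + 2 = a + b + 2 + 1 by ring, show a + 1 + b + 1 = a + b + 2 by ring,
        show a + 1 + (b + 1) + 2 = a + b + 3 + 1 by ring,
        show a + 1 + (b + 1) + 1 = a + b + 2 + 1 by ring,
        show a + (b + 1) + 2 = a + b + 3 by ring,
        show a + (b + 1) + 1 = a + b + 2 by ring, show b + 1 + 2 = b + 2 + 1 by ring,
        e1, e2]
      simp only [show a + b + 3 = a + b + 2 + 1 by ring]
      push_cast
      ring

end Inv231

namespace Inv231
open Finset Polynomial

def ext {n : ℕ} (π : Equiv.Perm (Fin n)) : ℕ → ℕ :=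
  fun i => if h : i < n then (π ⟨i, h⟩ : ℕ) else i

theorem ext_lt {n : ℕ} (π : Equiv.Perm (Fin n)) {i : ℕ} (h : i < n) :
    ext π i = π ⟨i, h⟩ := by simp [ext, h]

theorem ext_fin {n : ℕ} (π : Equiv.Perm (Fin n)) (i : Fin n) :
    ext π i = π i := ext_lt π i.2

theorem ext_ge {n : ℕ} (π : Equiv.Perm (Fin n)) {i : ℕ} (h : n ≤ i) :
    ext π i = i := by simp [ext, Nat.not_lt.mpr h]

theorem ext_inj {n : ℕ} : Function.Injective (ext (n := n)) := by
  intro π σ h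
  ext i
  rw [← ext_fin, ← ext_fin, h]

theorem ext_inv {n : ℕ} (π : Equiv.Perm (Fin n)) : Inv n (ext π) ↔ IsInvolution π := by
  constructor
  · intro h i
    have := h.1 i
    rw [ext_fin, ext_fin] at this
    exact Fin.ext this
  · intro h
    refine ⟨?_, fun i hi => ext_ge π hi⟩
    intro i
    rcases Nat.lt_or_ge i n with hi | hi
    · rw [ext_lt π hi, ext_fin, h]
    · rw [ext_ge π hi, ext_ge π hi]

theorem ext_surj {n : ℕ} {f : ℕ → ℕ} (hf : Inv n f) : ∃ π : Equiv.Perm (Fin n), ext π = f := by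
  have hlt : ∀ i < n, f i < n := by
    intro i hi
    by_contra hc
    have := hf.2 (f i) (by omega)
    rw [hf.1] at this
    omega
  let g : Fin n → Fin n := fun i => ⟨f i, hlt i i.2⟩
  have hg : Function.Involutive g := fun i => Fin.ext (hf.1 i)
  refine ⟨hg.toPerm, ?_⟩
  funext i
  rcases Nat.lt_or_ge i n with hi | hi
  · rw [ext_lt _ hi]; rfl
  · rw [ext_ge _ hi, hf.2 i hi]

theorem ext_F {n : ℕ} (π : Equiv.Perm (Fin n)) : fixedPts π = F n (ext π) := by
  unfold fixedPts F
  rw [Finset.sum_range, card_filter]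
  apply sum_congr rfl
  intro i _
  rw [ext_fin]
  simp only [Fin.ext_iff]

theorem occ_lt {n : ℕ} (π : Equiv.Perm (Fin n)) {i j k : ℕ} (o : Occ (ext π) i j k) : k < n := by
  by_contra hc
  obtain ⟨h1, h2, h3, h4⟩ := o
  rw [ext_ge π (show n ≤ k by omega)] at h3
  rcases Nat.lt_or_ge i n with hi | hi
  · rw [ext_lt π hi] at h3
    have := (π ⟨i, hi⟩).2
    omega
  · rw [ext_ge π hi] at h3
    omega

theorem ext_occ {n : ℕ} (π : Equiv.Perm (Fin n)) (i j k : Fin n) :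
    Occ (ext π) i j k ↔ i < j ∧ j < k ∧ (π k < π i ∧ π i < π j) := by
  unfold Occ
  simp only [ext_fin, Fin.lt_def]

theorem ext_One {n : ℕ} (π : Equiv.Perm (Fin n)) : occ231 π = 1 ↔ One (ext π) := by
  unfold occ231
  rw [Nat.card_eq_one_iff_exists]
  constructor
  · rintro ⟨⟨⟨i, j, k⟩, h⟩, hu⟩
    refine ⟨i, j, k, (ext_occ π i j k).2 h, ?_⟩
    intro i' j' k' o
    have hk := occ_lt π o
    have h1 := o.1
    have h2 := o.2.1
    have o' := (ext_occ π ⟨i', by omega⟩ ⟨j', by omega⟩ ⟨k', hk⟩).1 o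
    have := hu ⟨(⟨i', by omega⟩, ⟨j', by omega⟩, ⟨k', hk⟩), o'⟩
    simp only [Subtype.mk.injEq, Prod.mk.injEq, Fin.ext_iff] at this
    exact this
  · rintro ⟨i, j, k, o, hu⟩
    have hk := occ_lt π o
    have h1 := o.1
    have h2 := o.2.1
    have o' := (ext_occ π ⟨i, by omega⟩ ⟨j, by omega⟩ ⟨k, hk⟩).1 o
    refine ⟨⟨(⟨i, by omega⟩, ⟨j, by omega⟩, ⟨k, hk⟩), o'⟩, ?_⟩
    rintro ⟨⟨a, b, c⟩, h⟩
    have := hu _ _ _ ((ext_occ π a b c).2 h)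
    simp only [Subtype.mk.injEq, Prod.mk.injEq, Fin.ext_iff]
    exact this

theorem count_eq (n k : ℕ) : (iCountOnce231 n k : ℤ) = (wQ n).coeff k := by
  have h1 : (wQ n).coeff k = (((QS n).filter fun f => F n f = k).card : ℤ) := by
    unfold wQ
    rw [finsetSum_coeff, card_filter]
    push_cast
    apply sum_congr rfl
    intro f _
    rw [coeff_X_pow]
    simp only [eq_comm]
  rw [h1]
  norm_cast
  unfold iCountOnce231
  rw [← Nat.card_eq_finsetCard]
  have hm : ∀ π : Equiv.Perm (Fin n), (IsInvolution π ∧ occ231 π = 1 ∧ fixedPts π = k) ↔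
      ext π ∈ (QS n).filter fun f => F n f = k := by
    intro π
    rw [mem_filter, mem_QS, ext_inv, ext_One, ext_F, and_assoc]
  apply Nat.card_eq_of_bijective
    (fun π : {π : Equiv.Perm (Fin n) // IsInvolution π ∧ occ231 π = 1 ∧ fixedPts π = k} =>
      (⟨ext π.1, (hm π.1).1 π.2⟩ : {f // f ∈ (QS n).filter fun f => F n f = k}))
  constructor
  · intro π σ h
    exact Subtype.ext (ext_inj (Subtype.ext_iff.1 h))
  · rintro ⟨f, hf⟩
    obtain ⟨π, rfl⟩ := ext_surj ((mem_QS _ _).1 (mem_filter.1 hf).1).1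
    exact ⟨⟨π, (hm π).2 hf⟩, rfl⟩

theorem final_even (b k : ℕ) : (wQ (k + 2 * (b + 3))).coeff k =
    ((k : ℤ) - 1) * 2 ^ b *
        (((k + b + 1).choose (b + 2) : ℤ) + 2 * ((k + b).choose (b + 2) : ℤ) +
          ((k + b - 1).choose (b + 2) : ℤ)) := by
  rcases k with _ | _ | a
  · rw [wQ_bad _ _ (by omega), Nat.choose_eq_zero_of_lt (by omega),
      Nat.choose_eq_zero_of_lt (by omega), Nat.choose_eq_zero_of_lt (by omega)]
    simp
  · rw [wQ_bad _ _ (by omega)]; simp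
  · have pas : ∀ x y : ℕ, ((x + 1).choose (y + 1) : ℤ) = x.choose y + x.choose (y + 1) := by
      intro x y; rw [Nat.choose_succ_succ]; push_cast; rfl
    have h := q_main b a
    have e1 := pas (a + b + 2) (b + 1)
    have e2 := pas (a + b + 1) b
    have e3 := pas (a + b + 1) (b + 1)
    rw [show a + 1 + 1 = a + 2 by ring, h, show a + 2 + b + 1 = a + b + 2 + 1 by ring,
      show a + 2 + b - 1 = a + b + 1 by omega, show a + 2 + b = a + b + 2 by ring,
      show b + 2 = b + 1 + 1 by ring, e1]
    rw [show a + b + 2 = a + b + 1 + 1 by ring, e2, e3]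
    push_cast
    ring

end Inv231

/-- For all `n ≥ 4`, `0 ≤ k ≤ n` with `n + k` even and `n - k ≥ 6`,
`i_n^k(∅;231) = (k-1) · 2^{(n-k-6)/2} · ( C((n+k)/2 - 2, (n-k)/2 - 1)
  + 2·C((n+k)/2 - 3, (n-k)/2 - 1) + C((n+k)/2 - 4, (n-k)/2 - 1) )` (as integers);
when `n + k` is odd, `i_n^k(∅;231) = 0`. -/
theorem statement15 (n k : ℕ) (hn : 4 ≤ n) (hk : k ≤ n) (h6 : 6 ≤ n - k) :
    (Even (n + k) → (iCountOnce231 n k : ℤ) =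
      ((k : ℤ) - 1) * 2 ^ ((n - k - 6) / 2) *
        ((((n + k) / 2 - 2).choose ((n - k) / 2 - 1) : ℤ) +
          2 * (((n + k) / 2 - 3).choose ((n - k) / 2 - 1) : ℤ) +
          (((n + k) / 2 - 4).choose ((n - k) / 2 - 1) : ℤ))) ∧
    (Odd (n + k) → iCountOnce231 n k = 0) := by
  have _ := hn
  rw [← Nat.cast_inj (R := ℤ), Inv231.count_eq]
  constructor
  · intro he
    obtain ⟨c, hc⟩ := he
    obtain ⟨b, rfl⟩ : ∃ b, n = k + 2 * (b + 3) := ⟨c - k - 3, by omega⟩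
    rw [Inv231.final_even]
    rw [show (k + 2 * (b + 3) - k - 6) / 2 = b by omega,
      show (k + 2 * (b + 3) - k) / 2 - 1 = b + 2 by omega,
      show (k + 2 * (b + 3) + k) / 2 - 2 = k + b + 1 by omega,
      show (k + 2 * (b + 3) + k) / 2 - 3 = k + b by omega,
      show (k + 2 * (b + 3) + k) / 2 - 4 = k + b - 1 by omega]
  · intro ho
    rw [Nat.odd_iff] at ho
    rw [Inv231.wQ_bad _ _ (by omega)]
    rfl
end

section
/- For all integers n ≥ 1 and 0 ≤ k ≤ n, the number of involutions of {1,…,n} with exactly k fixed points containing the pattern 231 exactly once equals the number of involutions of {1,…,n} with exactly k fixed points containing the pattern 312 exactly once: i_n^k(∅;231) = i_n^k(∅;312). -/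
/-- The number of occurrences of the pattern 312 in a permutation of `Fin n`. -/
noncomputable def occ312 {n : ℕ} (π : Equiv.Perm (Fin n)) : ℕ :=
  Nat.card {t : Fin n × Fin n × Fin n //
    t.1 < t.2.1 ∧ t.2.1 < t.2.2 ∧ (π t.2.1 < π t.2.2 ∧ π t.2.2 < π t.1)}

/-- `i_n^k(∅;312)`: the number of involutions of `{1, …, n}` with exactly `k` fixed
points containing the pattern 312 exactly once. -/
noncomputable def iCountOnce312 (n k : ℕ) : ℕ :=
  Nat.card {π : Equiv.Perm (Fin n) // IsInvolution π ∧ occ312 π = 1 ∧ fixedPts π = k}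

theorem occ_eq_of_invol {n : ℕ} (π : Equiv.Perm (Fin n)) (h : IsInvolution π) :
    occ231 π = occ312 π := by
  unfold occ231 occ312
  refine Nat.card_congr
    { toFun := fun t => ⟨(π t.1.2.2, π t.1.1, π t.1.2.1), ?_⟩
      invFun := fun t => ⟨(π t.1.2.1, π t.1.2.2, π t.1.1), ?_⟩
      left_inv := ?_
      right_inv := ?_ }
  · obtain ⟨⟨a, b, c⟩, h1, h2, h3, h4⟩ := t
    simp only [h a, h b, h c]
    exact ⟨h3, h4, h1, h2⟩
  · obtain ⟨⟨a, b, c⟩, h1, h2, h3, h4⟩ := t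
    simp only [h a, h b, h c]
    exact ⟨h3, h4, h1, h2⟩
  · rintro ⟨⟨a, b, c⟩, ht⟩
    simp [h a, h b, h c]
  · rintro ⟨⟨a, b, c⟩, ht⟩
    simp [h a, h b, h c]

/-- For all `n ≥ 1` and `0 ≤ k ≤ n`, `i_n^k(∅;231) = i_n^k(∅;312)`. -/
theorem statement16 (n k : ℕ) (hn : 1 ≤ n) (hk : k ≤ n) :
    iCountOnce231 n k = iCountOnce312 n k := by
  unfold iCountOnce231 iCountOnce312
  refine Nat.card_congr (Equiv.subtypeEquivRight fun π => ?_)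
  refine and_congr_right fun h => ?_
  rw [occ_eq_of_invol π h]
end

section
/- For every integer n ≥ 5, the total number of involutions of {1,2,…,n} that contain the pattern 231 exactly once equals (n-1)·2^{n-6}, i.e. 64·i_n(∅;231) = (n-1)·2^n. -/
/-- `i_n(∅;231)`: the number of involutions of `{1, …, n}` containing the pattern
231 exactly once. -/
noncomputable def iCountOnceTotal231 (n : ℕ) : ℕ :=
  Nat.card {π : Equiv.Perm (Fin n) // IsInvolution π ∧ occ231 π = 1}

/-- occurrence of 231 in a function on the naturals -/
def Occ (f : ℕ → ℕ) (i j k : ℕ) : Prop := i < j ∧ j < k ∧ f k < f i ∧ f i < f j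

def Nice (n : ℕ) (f : ℕ → ℕ) : Prop := (∀ i, f (f i) = i) ∧ ∀ i, n ≤ i → f i = i

def Av (f : ℕ → ℕ) : Prop := ∀ i j k, ¬ Occ f i j k

def Once (f : ℕ → ℕ) : Prop := ∃ i j k, Occ f i j k ∧
  ∀ i' j' k', Occ f i' j' k' → i' = i ∧ j' = j ∧ k' = k

def glue (m : ℕ) (s g : ℕ → ℕ) : ℕ → ℕ := fun i => if i ≤ m then s i else g (i - (m + 1)) + (m + 1)

def rv (m : ℕ) : ℕ → ℕ := fun i => m - i

def cc : ℕ → ℕ := fun i => if i = 0 then 3 else if i = 3 then 0 else i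

theorem glue_le {m : ℕ} {s g : ℕ → ℕ} {i : ℕ} (h : i ≤ m) : glue m s g i = s i := by
  simp [glue, h]

theorem glue_add {m : ℕ} {s g : ℕ → ℕ} (i : ℕ) : glue m s g (i + (m + 1)) = g i + (m + 1) := by
  have : ¬ (i + (m + 1) ≤ m) := by omega
  simp [glue]
  omega

theorem cases_le (m i : ℕ) : i ≤ m ∨ ∃ t, i = t + (m + 1) := by
  by_cases h : i ≤ m
  · exact Or.inl h
  · exact Or.inr ⟨i - (m + 1), by omega⟩

theorem glue_nice {m n : ℕ} {s g : ℕ → ℕ} (hs : ∀ i, i ≤ m → s i ≤ m ∧ s (s i) = i)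
    (hg : Nice n g) : Nice (n + (m + 1)) (glue m s g) := by
  refine ⟨fun i => ?_, fun i hi => ?_⟩
  · rcases cases_le m i with h | ⟨t, rfl⟩
    · rw [glue_le h, glue_le (hs i h).1, (hs i h).2]
    · rw [glue_add, glue_add, hg.1]
  · rcases cases_le m i with h | ⟨t, rfl⟩
    · omega
    · rw [glue_add, hg.2 t (by omega)]

theorem glue_inj (m : ℕ) (s : ℕ → ℕ) : Function.Injective (glue m s) := by
  intro g g' h
  funext i
  have := congrFun h (i + (m + 1))
  rw [glue_add, glue_add] at this
  omega

theorem glue_occ {m : ℕ} {s g : ℕ → ℕ} (hs : ∀ i, i ≤ m → s i ≤ m) {i j k : ℕ} :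
    Occ (glue m s g) i j k ↔ (k ≤ m ∧ Occ s i j k) ∨
      ∃ a b c, i = a + (m + 1) ∧ j = b + (m + 1) ∧ k = c + (m + 1) ∧ Occ g a b c := by
  constructor
  · rintro ⟨h1, h2, h3, h4⟩
    rcases cases_le m k with hk | ⟨c, rfl⟩
    · left
      rw [glue_le hk, glue_le (by omega)] at h3
      rw [glue_le (by omega), glue_le (by omega)] at h4
      exact ⟨hk, h1, h2, h3, h4⟩
    · right
      rcases cases_le m i with hi | ⟨a, rfl⟩
      · rw [glue_add, glue_le hi] at h3
        have := hs i hi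
        omega
      · obtain ⟨b, rfl⟩ : ∃ b, j = b + (m + 1) := ⟨j - (m + 1), by omega⟩
        rw [glue_add, glue_add] at h3 h4
        exact ⟨a, b, c, rfl, rfl, rfl, by omega, by omega, by omega, by omega⟩
  · rintro (⟨hk, h1, h2, h3, h4⟩ | ⟨a, b, c, rfl, rfl, rfl, h1, h2, h3, h4⟩)
    · refine ⟨h1, h2, ?_, ?_⟩
      · rw [glue_le hk, glue_le (by omega)]; exact h3
      · rw [glue_le (by omega), glue_le (by omega)]; exact h4
    · refine ⟨by omega, by omega, ?_, ?_⟩ <;> rw [glue_add, glue_add] <;> omega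

theorem rv_ok (m i : ℕ) (h : i ≤ m) : rv m i ≤ m ∧ rv m (rv m i) = i := by
  simp only [rv]; omega

theorem rv_occ {m i j k : ℕ} : ¬ Occ (rv m) i j k := by
  simp only [Occ, rv]; omega

theorem cc_ok (i : ℕ) (h : i ≤ 3) : cc i ≤ 3 ∧ cc (cc i) = i := by
  interval_cases i <;> simp [cc]

theorem cc_occ {i j k : ℕ} (hk : k ≤ 3) : Occ cc i j k ↔ i = 1 ∧ j = 2 ∧ k = 3 := by
  constructor
  · rintro ⟨h1, h2, h3, h4⟩
    have : j ≤ 3 := by omega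
    have : i ≤ 3 := by omega
    interval_cases k <;> interval_cases j <;> interval_cases i <;> simp_all [cc]
  · rintro ⟨rfl, rfl, rfl⟩
    simp [Occ, cc]

/-- If `f` maps `[0,m]` as `s` does, it is a glue. -/
theorem eq_glue {m n : ℕ} {s f : ℕ → ℕ} (hf : Nice (n + (m + 1)) f)
    (hs : ∀ i, i ≤ m → s i ≤ m) (h : ∀ i, i ≤ m → f i = s i) :
    ∃ g, Nice n g ∧ f = glue m s g := by
  have key : ∀ t, m + 1 ≤ f (t + (m + 1)) := by
    intro t
    by_contra hc
    have h1 := h _ (show f (t + (m + 1)) ≤ m by omega)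
    rw [hf.1] at h1
    have := hs _ (show f (t + (m + 1)) ≤ m by omega)
    omega
  refine ⟨fun t => f (t + (m + 1)) - (m + 1), ⟨fun t => ?_, fun t ht => ?_⟩, ?_⟩
  · have := key t
    simp only
    rw [Nat.sub_add_cancel this, hf.1]
    omega
  · simp only
    rw [hf.2 _ (by omega)]
    omega
  · funext i
    rcases cases_le m i with hi | ⟨t, rfl⟩
    · rw [glue_le hi, h i hi]
    · rw [glue_add]
      have := key t
      omega

theorem f0_lt {n : ℕ} {f : ℕ → ℕ} (hf : Nice (n + 1) f) : f 0 ≤ n := by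
  by_contra hc
  have h1 := hf.2 (f 0) (by omega)
  rw [hf.1] at h1
  omega

/-- no occurrence ending at `f 0` implies reversal -/
theorem rev_of {f : ℕ → ℕ} (hi : ∀ i, f (f i) = i)
    (h : ∀ i j, ¬ Occ f i j (f 0)) : ∀ i, i ≤ f 0 → f i = rv (f 0) i := by
  have hinj : ∀ x y, f x = f y → x = y := fun x y hxy => by rw [← hi x, hxy, hi]
  have hdec : ∀ i j, i < j → j ≤ f 0 → f j < f i := by
    intro i j hij hj
    rcases Nat.lt_or_ge (f j) (f i) with h1 | h1
    · exact h1
    · exfalso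
      have h2 : f i ≠ f j := fun h2 => by have := hinj _ _ h2; omega
      rcases Nat.lt_or_ge j (f 0) with h3 | h3
      · refine h i j ⟨hij, h3, ?_, by omega⟩
        rw [hi]
        rcases Nat.eq_zero_or_pos (f i) with h4 | h4
        · have : i = f 0 := by rw [← h4, hi]
          omega
        · exact h4
      · have : j = f 0 := by omega
        have h5 : f j = 0 := by rw [this, hi]
        omega
  have up : ∀ i, i ≤ f 0 → f i + i ≤ f 0 := by
    intro i
    induction i with
    | zero => simp
    | succ i ih =>
      intro hle
      have := hdec i (i + 1) (by omega) hle
      have := ih (by omega)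
      omega
  have dn : ∀ i, i ≤ f 0 → i ≤ f (f 0 - i) := by
    intro i
    induction i with
    | zero => simp
    | succ i ih =>
      intro hle
      have := hdec (f 0 - (i + 1)) (f 0 - i) (by omega) (by omega)
      have := ih (by omega)
      omega
  intro i hle
  have h1 := up i hle
  have h2 := dn (f 0 - i) (by omega)
  rw [show f 0 - (f 0 - i) = i by omega] at h2
  simp only [rv]
  omega

/-- an occurrence ending at `f 0`, if unique, forces a 4231 block -/
theorem cc_of {f : ℕ → ℕ} (hi : ∀ i, f (f i) = i) {i j : ℕ} (ho : Occ f i j (f 0))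
    (hu : ∀ i' j' k', Occ f i' j' k' → i' = i ∧ j' = j ∧ k' = f 0) :
    f 0 = 3 ∧ f 1 = 1 ∧ f 2 = 2 := by
  have hinj : ∀ x y, f x = f y → x = y := fun x y hxy => by rw [← hi x, hxy, hi]
  obtain ⟨m, hm⟩ : ∃ m, m = f 0 := ⟨_, rfl⟩
  have hfm : f m = 0 := by rw [hm, hi]
  rw [← hm] at ho hu ⊢
  have hpos : ∀ x, x ≠ m → 0 < f x := by
    intro x hx
    rcases Nat.eq_zero_or_pos (f x) with h4 | h4
    · exact absurd (by rw [hm, ← h4, hi]) hx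
    · exact h4
  have hmax : ∀ x, x ≤ m → f x ≤ m := by
    intro x hx
    by_contra hc
    have hx0 : x ≠ 0 := by rintro rfl; omega
    have hxm : x ≠ m := by rintro rfl; omega
    have a1 := hu 0 x m ⟨by omega, by omega, by omega, by omega⟩
    have a2 := hu 0 x (f x) ⟨by omega, by omega, by rw [hi]; omega, by omega⟩
    omega
  have hdec : ∀ x y, x < y → y ≤ m → ¬ (x = i ∧ y = j) → f y < f x := by
    intro x y hxy hy hne
    by_contra hc
    have h2 : f x ≠ f y := fun h2 => by have := hinj _ _ h2; omega
    have hym : y ≠ m := by rintro rfl; have := hpos x (by omega); omega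
    have := hu x y m ⟨hxy, by omega, by have := hpos x (by omega); omega, by omega⟩
    omega
  obtain ⟨o1, o2, o3, o4⟩ := ho
  have hjm : j = m - 1 := by
    by_contra hc
    have h1 := hdec i (m - 1) (by omega) (by omega) (by omega)
    have := hu i j (m - 1) ⟨o1, by omega, h1, o4⟩
    omega
  have hij : j = i + 1 := by
    by_contra hc
    have h1 := hdec i (i + 1) (by omega) (by omega) (by omega)
    have h2 := hdec (i + 1) j (by omega) (by omega) (by omega)
    omega
  have hi0 : i ≠ 0 := by
    rintro rfl
    have := hmax j (by omega)
    omega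
  have hi1 : i = 1 := by
    by_contra hc
    have hj1 : f j = 1 := by
      by_contra h1
      have hj0 := hpos j (by omega)
      have hjx := hmax j (by omega)
      have hlt : 1 < f j := by omega
      have a1 := hdec 1 (f j) hlt hjx (by omega)
      rw [hi] at a1
      have a2 := hmax 1 (by omega)
      have : f 1 = f 0 := by omega
      have := hinj _ _ this
      omega
    have := hpos i (by omega)
    omega
  have hm3 : m = 3 := by omega
  subst hi1
  subst hm3
  obtain rfl : j = 2 := by omega
  have b1 := hmax 2 (by omega)
  have b2 := hpos 1 (by omega)
  have b3 : f 2 ≠ 3 := fun hh => by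
    have : (2 : ℕ) = 0 := hinj _ _ (by omega)
    omega
  exact ⟨rfl, by omega, by omega⟩

theorem av_step {n : ℕ} {f : ℕ → ℕ} : (Nice (n + 1) f ∧ Av f) ↔
    ∃ m, m ≤ n ∧ ∃ g, (Nice (n - m) g ∧ Av g) ∧ glue m (rv m) g = f := by
  constructor
  · rintro ⟨hf, ha⟩
    have h0 := f0_lt hf
    refine ⟨f 0, h0, ?_⟩
    have hr := rev_of hf.1 (fun i j => ha i j _)
    have hf' : Nice ((n - f 0) + (f 0 + 1)) f := by
      rwa [show (n - f 0) + (f 0 + 1) = n + 1 by omega]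
    obtain ⟨g, hg, he⟩ := eq_glue hf' (fun i h => (rv_ok (f 0) i h).1) hr
    refine ⟨g, ⟨hg, fun a b c ho => ?_⟩, he.symm⟩
    refine ha (a + (f 0 + 1)) (b + (f 0 + 1)) (c + (f 0 + 1)) ?_
    have := (glue_occ (g := g) (fun i h => (rv_ok (f 0) i h).1)).2
      (Or.inr ⟨a, b, c, rfl, rfl, rfl, ho⟩)
    rwa [← he] at this
  · rintro ⟨m, hm, g, ⟨hg, ha⟩, rfl⟩
    constructor
    · have := glue_nice (rv_ok m) hg
      rwa [show (n - m) + (m + 1) = n + 1 by omega] at this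
    · intro i j k ho
      rcases (glue_occ (fun i h => (rv_ok m i h).1)).1 ho with ⟨_, h⟩ | ⟨a, b, c, _, _, _, h⟩
      · exact rv_occ h
      · exact ha _ _ _ h

theorem once_step {n : ℕ} {f : ℕ → ℕ} : (Nice (n + 1) f ∧ Once f) ↔
    (∃ m, m ≤ n ∧ ∃ g, (Nice (n - m) g ∧ Once g) ∧ glue m (rv m) g = f) ∨
    (3 ≤ n ∧ ∃ g, (Nice (n - 3) g ∧ Av g) ∧ glue 3 cc g = f) := by
  constructor
  · rintro ⟨hf, i, j, k, ho, hu⟩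
    have h0 := f0_lt hf
    by_cases hk : k = f 0
    · right
      subst hk
      obtain ⟨e0, e1, e2⟩ := cc_of hf.1 ho hu
      have e3 : f 3 = 0 := by rw [← e0, hf.1]
      refine ⟨by omega, ?_⟩
      have hf' : Nice ((n - 3) + (3 + 1)) f := by
        rwa [show (n - 3) + (3 + 1) = n + 1 by omega]
      obtain ⟨g, hg, he⟩ := eq_glue (s := cc) hf' (fun i h => (cc_ok i h).1)
        (fun i h => by interval_cases i <;> simp [cc, e0, e1, e2, e3])
      refine ⟨g, ⟨hg, fun a b c hoc => ?_⟩, he.symm⟩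
      have := (glue_occ (g := g) (fun i h => (cc_ok i h).1)).2
        (Or.inr ⟨a, b, c, rfl, rfl, rfl, hoc⟩)
      rw [← he] at this
      have := (hu _ _ _ this).2.2
      omega
    · left
      refine ⟨f 0, h0, ?_⟩
      have hr := rev_of hf.1 (fun i' j' h => hk (hu _ _ _ h).2.2.symm)
      have hf' : Nice ((n - f 0) + (f 0 + 1)) f := by
        rwa [show (n - f 0) + (f 0 + 1) = n + 1 by omega]
      obtain ⟨g, hg, he⟩ := eq_glue hf' (fun i h => (rv_ok (f 0) i h).1) hr
      refine ⟨g, ⟨hg, ?_⟩, he.symm⟩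
      have hgo := fun {i j k} => glue_occ (g := g) (i := i) (j := j) (k := k)
        (fun i h => (rv_ok (f 0) i h).1)
      rw [← he] at hgo
      rcases hgo.1 ho with ⟨_, h⟩ | ⟨a, b, c, rfl, rfl, rfl, h⟩
      · exact absurd h rv_occ
      · refine ⟨a, b, c, h, fun a' b' c' h' => ?_⟩
        have := hu _ _ _ (hgo.2 (Or.inr ⟨a', b', c', rfl, rfl, rfl, h'⟩))
        omega
  · rintro (⟨m, hm, g, ⟨hg, a, b, c, ho, hu⟩, rfl⟩ | ⟨hn, g, ⟨hg, ha⟩, rfl⟩)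
    · constructor
      · have := glue_nice (rv_ok m) hg
        rwa [show (n - m) + (m + 1) = n + 1 by omega] at this
      · refine ⟨a + (m + 1), b + (m + 1), c + (m + 1),
          (glue_occ (fun i h => (rv_ok m i h).1)).2 (Or.inr ⟨a, b, c, rfl, rfl, rfl, ho⟩), ?_⟩
        intro i j k ho'
        rcases (glue_occ (fun i h => (rv_ok m i h).1)).1 ho' with
          ⟨_, h⟩ | ⟨a', b', c', rfl, rfl, rfl, h⟩
        · exact absurd h rv_occ
        · have := hu _ _ _ h
          omega
    · constructor
      · have := glue_nice cc_ok hg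
        rwa [show (n - 3) + (3 + 1) = n + 1 by omega] at this
      · refine ⟨1, 2, 3, (glue_occ (fun i h => (cc_ok i h).1)).2
          (Or.inl ⟨le_refl _, (cc_occ (le_refl _)).2 ⟨rfl, rfl, rfl⟩⟩), ?_⟩
        intro i j k ho'
        rcases (glue_occ (fun i h => (cc_ok i h).1)).1 ho' with
          ⟨hk, h⟩ | ⟨a', b', c', rfl, rfl, rfl, h⟩
        · exact (cc_occ hk).1 h
        · exact absurd h (ha _ _ _)

def aN (n : ℕ) : ℕ := if n = 0 then 1 else 2 ^ (n - 1)

def bN : ℕ → ℕ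
  | 0 => 0
  | 1 => 0
  | 2 => 0
  | 3 => 0
  | 4 => 1
  | 5 => 2
  | (n + 6) => (n + 5) * 2 ^ n

theorem aN_sum (n : ℕ) : ∑ j ∈ Finset.range (n + 1), aN j = aN (n + 1) := by
  induction n with
  | zero => simp [aN]
  | succ n ih =>
    rw [Finset.sum_range_succ, ih]
    simp [aN, pow_succ]
    ring

theorem bN_sum (n : ℕ) : ∑ j ∈ Finset.range (n + 1), bN j + (if 3 ≤ n then aN (n - 3) else 0)
    = bN (n + 1) := by
  have h : ∀ n, ∑ j ∈ Finset.range (n + 6), bN j = (n + 3) * 2 ^ n := by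
    intro n
    induction n with
    | zero => simp [Finset.sum_range_succ, bN]
    | succ n ih =>
      rw [show n + 1 + 6 = (n + 6) + 1 by ring, Finset.sum_range_succ, ih]
      simp only [bN]
      ring
  rcases Nat.lt_or_ge n 5 with h5 | h5
  · interval_cases n <;> simp [Finset.sum_range_succ, bN, aN]
  · obtain ⟨t, rfl⟩ : ∃ t, n = t + 5 := ⟨n - 5, by omega⟩
    rw [show t + 5 + 1 = t + 6 by ring, h, if_pos (by omega), show t + 5 - 3 = t + 2 by omega]
    simp only [bN, aN]
    rw [if_neg (by omega), show t + 2 - 1 = t + 1 by omega]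
    ring

theorem nice_zero {f : ℕ → ℕ} : Nice 0 f ↔ f = id := by
  constructor
  · intro h
    funext i
    exact h.2 i (by omega)
  · rintro rfl
    exact ⟨fun _ => rfl, fun _ _ => rfl⟩

theorem glue_disj {m m' : ℕ} {g g' : ℕ → ℕ} (h : glue m (rv m) g = glue m' (rv m') g') :
    m = m' := by
  have := congrFun h 0
  simpa [glue, rv] using this

open Classical in
theorem card_union (n : ℕ) (S : ℕ → Finset (ℕ → ℕ)) (w : ℕ → ℕ) (hw : ∀ m, m ≤ n → (S m).card = w m) :
    ((Finset.range (n + 1)).biUnion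
      (fun m => (S (n - m)).map ⟨glue m (rv m), glue_inj m _⟩)).card
      = ∑ j ∈ Finset.range (n + 1), w j := by
  rw [Finset.card_biUnion]
  · rw [← Finset.sum_range_reflect]
    refine Finset.sum_congr rfl fun m hm => ?_
    rw [Finset.mem_range] at hm
    rw [Finset.card_map, hw _ (by omega)]
    congr 1
    omega
  · intro m _ m' _ hne
    rw [Function.onFun, Finset.disjoint_left]
    intro f h1 h2
    simp only [Finset.mem_map, Function.Embedding.coeFn_mk] at h1 h2
    obtain ⟨g, _, e⟩ := h1
    obtain ⟨g', _, e'⟩ := h2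
    exact hne (glue_disj (e.trans e'.symm))

open Classical in
theorem exA (n : ℕ) : ∃ S : Finset (ℕ → ℕ), (∀ f, f ∈ S ↔ (Nice n f ∧ Av f)) ∧ S.card = aN n := by
  induction n using Nat.strong_induction_on with
  | _ n ih =>
    rcases n with _ | n
    · refine ⟨{id}, fun f => ?_, by simp [aN]⟩
      rw [Finset.mem_singleton, nice_zero]
      constructor
      · rintro rfl
        refine ⟨rfl, fun i j k => ?_⟩
        simp only [Occ, id]
        omega
      · exact fun h => h.1
    · choose! S hS using ih
      refine ⟨(Finset.range (n + 1)).biUnion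
        (fun m => (S (n - m)).map ⟨glue m (rv m), glue_inj m _⟩), fun f => ?_, ?_⟩
      · rw [av_step]
        simp only [Finset.mem_biUnion, Finset.mem_range, Finset.mem_map,
          Function.Embedding.coeFn_mk]
        refine exists_congr fun m => ?_
        rw [Nat.lt_succ_iff]
        refine and_congr_right fun hm => exists_congr fun g => ?_
        rw [(hS (n - m) (by omega)).1]
      · rw [card_union n S aN (fun m hm => (hS m (by omega)).2), aN_sum]

open Classical in
theorem exB (n : ℕ) : ∃ S : Finset (ℕ → ℕ), (∀ f, f ∈ S ↔ (Nice n f ∧ Once f)) ∧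
    S.card = bN n := by
  induction n using Nat.strong_induction_on with
  | _ n ih =>
    rcases n with _ | n
    · refine ⟨∅, fun f => ?_, by simp [bN]⟩
      rw [nice_zero]
      constructor
      · simp
      · rintro ⟨rfl, i, j, k, ho, -⟩
        simp only [Occ, id] at ho
        omega
    · choose! S hS using ih
      obtain ⟨A, hA, hAc⟩ := exA (n - 3)
      refine ⟨(Finset.range (n + 1)).biUnion
        (fun m => (S (n - m)).map ⟨glue m (rv m), glue_inj m _⟩) ∪
        (if 3 ≤ n then A.map ⟨glue 3 cc, glue_inj 3 _⟩ else ∅), fun f => ?_, ?_⟩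
      · rw [once_step, Finset.mem_union]
        refine or_congr ?_ ?_
        · simp only [Finset.mem_biUnion, Finset.mem_range, Finset.mem_map,
            Function.Embedding.coeFn_mk]
          refine exists_congr fun m => ?_
          rw [Nat.lt_succ_iff]
          refine and_congr_right fun hm => exists_congr fun g => ?_
          rw [(hS (n - m) (by omega)).1]
        · by_cases h3 : 3 ≤ n
          · simp [h3, hA]
          · simp [h3]
      · rw [Finset.card_union_of_disjoint, card_union n S bN (fun m hm => (hS m (by omega)).2),
          ← bN_sum]
        · by_cases h3 : 3 ≤ n
          · simp [h3, hAc]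
          · simp [h3]
        · rw [Finset.disjoint_left]
          intro f h1 h2
          by_cases h3 : 3 ≤ n
          · rw [if_pos h3] at h2
            simp only [Finset.mem_biUnion, Finset.mem_range, Finset.mem_map,
              Function.Embedding.coeFn_mk] at h1 h2
            obtain ⟨m, _, g, _, rfl⟩ := h1
            obtain ⟨g', _, e⟩ := h2
            have e0 := congrFun e 0
            have e1 := congrFun e 1
            simp [glue, rv, cc] at e0
            subst e0
            simp [glue, rv, cc] at e1
          · simp [h3] at h2

def ext {n : ℕ} (π : Equiv.Perm (Fin n)) : ℕ → ℕ := fun i => if h : i < n then (π ⟨i, h⟩ : ℕ) else i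

theorem ext_val {n : ℕ} (π : Equiv.Perm (Fin n)) (i : Fin n) : ext π i = π i := by
  simp [ext]

theorem ext_occ {n : ℕ} (π : Equiv.Perm (Fin n)) {i j k : ℕ} (h : Occ (ext π) i j k) : k < n := by
  by_contra hc
  obtain ⟨h1, h2, h3, h4⟩ := h
  have e : ext π k = k := by simp [ext, hc]
  rw [e] at h3
  by_cases hi : i < n
  · have := ext_val π ⟨i, hi⟩
    have := (π ⟨i, hi⟩).2
    simp only at *
    omega
  · have : ext π i = i := by simp [ext, hi]
    omega

theorem occ_iff {n : ℕ} (π : Equiv.Perm (Fin n)) : occ231 π = 1 ↔ Once (ext π) := by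
  have tr : ∀ a b c : Fin n, Occ (ext π) a b c ↔ (a < b ∧ b < c ∧ (π c < π a ∧ π a < π b)) := by
    intro a b c
    simp only [Occ, ext_val, Fin.lt_def]
  unfold occ231
  rw [Nat.card_eq_one_iff_exists]
  constructor
  · rintro ⟨⟨⟨a, b, c⟩, h⟩, hu⟩
    refine ⟨a, b, c, (tr a b c).2 h, fun i j k ho => ?_⟩
    have hk := ext_occ π ho
    have hj : j < n := ho.2.1.trans hk
    have hi : i < n := ho.1.trans hj
    have := hu ⟨(⟨i, hi⟩, ⟨j, hj⟩, ⟨k, hk⟩), (tr ⟨i, hi⟩ ⟨j, hj⟩ ⟨k, hk⟩).1 ho⟩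
    simp only [Subtype.mk.injEq, Prod.mk.injEq] at this
    obtain ⟨rfl, rfl, rfl⟩ := this
    exact ⟨rfl, rfl, rfl⟩
  · rintro ⟨i, j, k, ho, hu⟩
    have hk := ext_occ π ho
    have hj : j < n := ho.2.1.trans hk
    have hi : i < n := ho.1.trans hj
    refine ⟨⟨(⟨i, hi⟩, ⟨j, hj⟩, ⟨k, hk⟩), (tr ⟨i, hi⟩ ⟨j, hj⟩ ⟨k, hk⟩).1 ho⟩, ?_⟩
    rintro ⟨⟨a, b, c⟩, h⟩
    have := hu a b c ((tr a b c).2 h)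
    simp only [Subtype.mk.injEq, Prod.mk.injEq, Fin.ext_iff]
    exact this

theorem ext_nice {n : ℕ} (π : Equiv.Perm (Fin n)) (h : IsInvolution π) : Nice n (ext π) := by
  refine ⟨fun i => ?_, fun i hi => ?_⟩
  · by_cases hi : i < n
    · have e := ext_val π ⟨i, hi⟩
      simp only at e
      rw [e, ext_val, h]
    · have e : ext π i = i := by simp [ext, hi]
      rw [e, e]
  · simp [ext, Nat.not_lt.2 hi]

theorem count_eq (n : ℕ) : iCountOnceTotal231 n = bN n := by
  obtain ⟨S, hS, hc⟩ := exB n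
  rw [← hc, ← Nat.card_eq_finsetCard S]
  refine Nat.card_eq_of_bijective
    (fun p => ⟨ext p.1, (hS _).2 ⟨ext_nice p.1 p.2.1, (occ_iff p.1).1 p.2.2⟩⟩) ⟨?_, ?_⟩
  · rintro ⟨p, hp⟩ ⟨q, hq⟩ h
    simp only [Subtype.mk.injEq] at h ⊢
    refine Equiv.ext fun i => Fin.ext ?_
    rw [← ext_val, ← ext_val, h]
  · rintro ⟨f, hf⟩
    obtain ⟨hn, ho⟩ := (hS f).1 hf
    have hlt : ∀ i, i < n → f i < n := by
      intro i hi
      by_contra hc'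
      have := hn.2 (f i) (by omega)
      rw [hn.1] at this
      omega
    let p : Equiv.Perm (Fin n) :=
      { toFun := fun i => ⟨f i, hlt i i.2⟩
        invFun := fun i => ⟨f i, hlt i i.2⟩
        left_inv := fun i => Fin.ext (hn.1 i)
        right_inv := fun i => Fin.ext (hn.1 i) }
    have hp : ext p = f := by
      funext i
      by_cases hi : i < n
      · simp [ext, hi, p]
      · simp [ext, hi, hn.2 i (by omega)]
    refine ⟨⟨p, fun i => Fin.ext (hn.1 i), (occ_iff p).2 (hp ▸ ho)⟩, ?_⟩
    simp only [hp]

theorem statement17 (n : ℕ) (hn : 5 ≤ n) :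
    64 * iCountOnceTotal231 n = (n - 1) * 2 ^ n := by
  rw [count_eq]
  rcases Nat.lt_or_ge n 6 with h | h
  · obtain rfl : n = 5 := by omega
    simp [bN]
  · obtain ⟨t, rfl⟩ : ∃ t, n = t + 6 := ⟨n - 6, by omega⟩
    simp only [bN]
    rw [show t + 6 - 1 = t + 5 by omega]
    ring
end

section
/- For all integers n ≥ 3 and 0 ≤ k ≤ n with n + k even, the number of involutions of {1,2,…,n} with exactly k fixed points that contain the pattern 321 exactly once equals (k(k+3)/(n+1))·C(n+1, (n-k)/2 - 1), i.e. (n+1)·i_n^k(∅;321) = k(k+3)·C(n+1, (n-k)/2 - 1); when n + k is odd this number is 0. -/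
/-- The number of occurrences of the pattern 321 in a permutation of `Fin n`. -/
noncomputable def occ321 {n : ℕ} (π : Equiv.Perm (Fin n)) : ℕ :=
  Nat.card {t : Fin n × Fin n × Fin n //
    t.1 < t.2.1 ∧ t.2.1 < t.2.2 ∧ (π t.2.2 < π t.2.1 ∧ π t.2.1 < π t.1)}

/-- `i_n^k(∅;321)`: the number of involutions of `{1, …, n}` with exactly `k` fixed
points containing the pattern 321 exactly once. -/
noncomputable def iCountOnce321 (n k : ℕ) : ℕ :=
  Nat.card {π : Equiv.Perm (Fin n) // IsInvolution π ∧ occ321 π = 1 ∧ fixedPts π = k}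

open Finset

/-- Ballot numbers. -/
def bal : ℕ → ℕ → ℕ
  | 0, 0 => 1
  | 0, _ + 1 => 0
  | m + 1, 0 => bal m 1
  | m + 1, j + 1 => bal m j + bal m (j + 2)

theorem bal_gt : ∀ (m j : ℕ), m < j → bal m j = 0 := by
  intro m
  induction m with
  | zero => intro j hj; cases j with
    | zero => omega
    | succ j => rfl
  | succ m ih => intro j hj; cases j with
    | zero => omega
    | succ j => simp only [bal]; rw [ih _ (by omega), ih _ (by omega)]

theorem bal_odd : ∀ (m j : ℕ), Odd (m + j) → bal m j = 0 := by
  intro m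
  induction m with
  | zero => intro j hj; cases j with
    | zero => simp at hj
    | succ j => rfl
  | succ m ih => intro j hj; cases j with
    | zero => simp only [bal]; exact ih _ hj
    | succ j =>
      simp only [bal]
      rw [ih _ (by grind), ih _ (by grind)]

theorem bal_choose : ∀ (m i j : ℕ), m = j + 2 * i →
    bal m j + (if i = 0 then 0 else m.choose (i - 1)) = m.choose i := by
  intro m
  induction m with
  | zero => intro i j h; have h1 : i = 0 := by omega
            have h2 : j = 0 := by omega
            subst h1 h2; simp [bal]
  | succ m ih =>
    intro i j h
    cases i with
    | zero =>
      have : j = m + 1 := by omega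
      subst this
      have := ih 0 m (by omega)
      simp [bal] at this ⊢
      rw [this, bal_gt _ _ (by omega)]
    | succ i =>
      cases j with
      | zero =>
        have := ih i 1 (by omega)
        simp only [bal]
        have e : m = 2 * i + 1 := by omega
        have s1 : m.choose (i + 1) = m.choose i := by
          rw [e]; apply Nat.choose_symm_of_eq_add; omega
        cases i with
        | zero => simp at this ⊢; simp at s1; omega
        | succ i =>
          simp [Nat.choose_succ_succ] at this s1 ⊢; omega
      | succ j =>
        have a1 := ih (i + 1) j (by omega)
        have a2 := ih i (j + 2) (by omega)
        simp only [bal]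
        cases i with
        | zero => simp at a1 a2 ⊢; omega
        | succ i =>
          simp [Nat.choose_succ_succ m (i + 1), Nat.choose_succ_succ m i] at a1 a2 ⊢; omega

theorem bal_closed (i j : ℕ) :
    (j + 2 * i + 1) * bal (j + 2 * i) j = (j + 1) * (j + 2 * i + 1).choose i := by
  have h := bal_choose (j + 2 * i) i j rfl
  cases i with
  | zero => simp at h ⊢; rw [h]; try simp
  | succ i =>
    set m := j + 2 * (i + 1) with hm
    simp at h
    have h2 := Nat.choose_succ_right_eq m i
    have h3 : (m + 1).choose (i + 1) = m.choose i + m.choose (i + 1) := Nat.choose_succ_succ m i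
    rw [h3]
    have h4 : m - i = j + i + 2 := by omega
    rw [h4] at h2
    have h5 : bal m j * (m + 1) = m.choose (i + 1) * (m + 1) - m.choose i * (m + 1) := by
      rw [← h]; rw [add_mul]; omega
    zify at h2 h ⊢
    have : (bal m j : ℤ) = m.choose (i + 1) - m.choose i := by linarith
    rw [this]
    have e : (m : ℤ) = j + 2 * (i + 1) := by rw [hm]; push_cast; ring
    rw [e]
    linarith

variable {n : ℕ}

/-- Pairs (arc opener, fixed point below the arc). -/
def covS (S : Finset (Fin n)) (π : Equiv.Perm (Fin n)) : Finset (Fin n × Fin n) :=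
  univ.filter fun p => p.2 ∈ S ∧ π p.2 = p.2 ∧ p.1 < p.2 ∧ p.2 < π p.1

def NN (π : Equiv.Perm (Fin n)) : Prop := ∀ a b, a < b → b < π b → π b < π a → False

structure Good (S T : Finset (Fin n)) (s k : ℕ) (π : Equiv.Perm (Fin n)) : Prop where
  inv : ∀ i, π (π i) = i
  out : ∀ y, y ∉ S → π y = y
  top : ∀ y ∈ T, π y < y
  nn : NN π
  cov : (covS S π).card = s
  fix : (S.filter fun b => π b = b).card = k

open Classical in
noncomputable def GS (S T : Finset (Fin n)) (s k : ℕ) : Finset (Equiv.Perm (Fin n)) :=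
  univ.filter fun π => Good S T s k π

theorem mem_GS {S T : Finset (Fin n)} {s k : ℕ} {π : Equiv.Perm (Fin n)} :
    π ∈ GS S T s k ↔ Good S T s k π := by simp [GS]

theorem Good.mem {S T : Finset (Fin n)} {s k : ℕ} {π : Equiv.Perm (Fin n)}
    (h : Good S T s k π) {y : Fin n} (hy : y ∈ S) : π y ∈ S := by
  by_contra hc
  have h1 := h.out _ hc
  have h2 := h.inv y
  rw [h2] at h1
  exact hc (h1 ▸ hy)

/-- configuration -/
structure Cfg (S T : Finset (Fin n)) (x : Fin n) : Prop where
  sub : T ⊆ S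
  up : ∀ t ∈ T, ∀ y ∈ S, y ∉ T → y < t
  xS : x ∈ S
  xT : x ∉ T
  mx : ∀ y ∈ S, y ∉ T → y ≤ x

theorem Cfg.gt {S T : Finset (Fin n)} {x : Fin n} (c : Cfg S T x) {y : Fin n} (hy : y ∈ S)
    (h : x < y) : y ∈ T := by
  by_contra hc
  exact absurd (c.mx y hy hc) (not_le.mpr h)

theorem good_lt {S T : Finset (Fin n)} {x : Fin n} {s k : ℕ} {π : Equiv.Perm (Fin n)} :
    Good S (insert x T) s k π ↔ Good S T s k π ∧ π x < x := by
  constructor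
  · intro h
    exact ⟨⟨h.inv, h.out, fun y hy => h.top y (mem_insert_of_mem hy), h.nn, h.cov, h.fix⟩,
      h.top x (mem_insert_self _ _)⟩
  · rintro ⟨h, hx⟩
    refine ⟨h.inv, h.out, ?_, h.nn, h.cov, h.fix⟩
    intro y hy
    rcases mem_insert.1 hy with rfl | hy
    · exact hx
    · exact h.top y hy

theorem fix_erase {S : Finset (Fin n)} {x : Fin n} {π : Equiv.Perm (Fin n)} (hx : x ∈ S)
    (h : π x = x) : (S.filter fun b => π b = b).card
      = ((S.erase x).filter fun b => π b = b).card + 1 := by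
  rw [filter_erase, card_erase_add_one]
  simp [hx, h]

/-- arcs over x correspond to T -/
theorem cov_erase {S T : Finset (Fin n)} {x : Fin n} {π : Equiv.Perm (Fin n)}
    (c : Cfg S T x) (hi : ∀ i, π (π i) = i) (ho : ∀ y, y ∉ S → π y = y)
    (ht : ∀ y ∈ T, π y < y) (h : π x = x) :
    (covS S π).card = (covS (S.erase x) π).card + T.card := by
  have hm : ∀ y ∈ S, π y ∈ S := by
    intro y hy
    by_contra hc
    have h1 := ho _ hc
    rw [hi y] at h1
    exact hc (h1 ▸ hy)
  have : covS S π = covS (S.erase x) π ∪ T.image (fun t => (π t, x)) := by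
    ext ⟨a, b⟩
    simp only [covS, mem_union, mem_filter, mem_univ, true_and, mem_image, Prod.mk.injEq, mem_erase]
    constructor
    · rintro ⟨h1, h2, h3, h4⟩
      by_cases hb : b = x
      · right
        subst hb
        refine ⟨π a, c.gt (hm a ?_) h4, hi a, rfl⟩
        by_contra hc
        have := ho a hc
        rw [this] at h4
        exact absurd h3 (not_lt.mpr h4.le)
      · left; exact ⟨⟨hb, h1⟩, h2, h3, h4⟩
    · rintro (⟨⟨_, h1⟩, h2, h3, h4⟩ | ⟨t, h1, rfl, rfl⟩)
      · exact ⟨h1, h2, h3, h4⟩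
      · have hxt := c.up t h1 x c.xS c.xT
        refine ⟨c.xS, h, ?_, by rw [hi]; exact hxt⟩
        rcases lt_trichotomy (π t) x with h5 | h5 | h5
        · exact h5
        · have := hi t
          rw [h5, h] at this
          exact absurd hxt (this ▸ lt_irrefl _)
        · have h6 := ht _ (c.gt (hm t (c.sub h1)) h5)
          rw [hi] at h6
          exact absurd h6 (not_lt.mpr (ht t h1).le)
  rw [this, card_union_of_disjoint, card_image_of_injective]
  · intro a b hab
    simpa using hab
  · rw [disjoint_left]
    rintro ⟨a, b⟩ h1 h2
    simp [covS] at h1 h2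
    obtain ⟨t, _, _, h3⟩ := h2
    exact h1.1.1 h3.symm

theorem good_eq {S T : Finset (Fin n)} {x : Fin n} {s k : ℕ} {π : Equiv.Perm (Fin n)}
    (c : Cfg S T x) :
    Good S T (s + T.card) (k + 1) π ∧ π x = x ↔ Good (S.erase x) T s k π := by
  constructor
  · rintro ⟨h, hx⟩
    refine ⟨h.inv, ?_, h.top, h.nn, ?_, ?_⟩
    · intro y hy
      by_cases hyx : y = x
      · rw [hyx, hx]
      · exact h.out y (fun hc => hy (mem_erase.2 ⟨hyx, hc⟩))
    · have := cov_erase c h.inv h.out h.top hx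
      rw [h.cov] at this
      omega
    · have := fix_erase c.xS hx
      rw [h.fix] at this
      omega
  · intro h
    have hx : π x = x := h.out x (by simp)
    have ho : ∀ y, y ∉ S → π y = y := fun y hy => h.out y (fun hc => hy (mem_of_mem_erase hc))
    refine ⟨⟨h.inv, ho, h.top, h.nn, ?_, ?_⟩, hx⟩
    · rw [cov_erase c h.inv ho h.top hx, h.cov]
    · rw [fix_erase c.xS hx, h.fix]

theorem good_eq' {S T : Finset (Fin n)} {x : Fin n} {s k : ℕ} {π : Equiv.Perm (Fin n)}
    (c : Cfg S T x) (h : Good S T s k π) (hx : π x = x) : T.card ≤ s ∧ 1 ≤ k := by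
  have h1 := cov_erase c h.inv h.out h.top hx
  have h2 := fix_erase c.xS hx
  rw [h.cov] at h1
  rw [h.fix] at h2
  omega

theorem good_gt {S T : Finset (Fin n)} {x t : Fin n} {s k : ℕ} {π : Equiv.Perm (Fin n)}
    (c : Cfg S T x) (htT : t ∈ T) (htm : ∀ y ∈ T, y ≤ t) (h : Good S T s k π) (hx : x < π x) :
    π x = t := by
  by_contra hne
  have h1 : π x ∈ T := c.gt (h.mem c.xS) hx
  have hlt : π x < t := lt_of_le_of_ne (htm _ h1) hne
  have h2 : π t < t := h.top t htT
  have h3 : π t < x := by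
    rcases lt_trichotomy (π t) x with h5 | h5 | h5
    · exact h5
    · exact absurd (by rw [← h5, h.inv]) hne
    · have h6 := h.top _ (c.gt (h.mem (c.sub htT)) h5)
      rw [h.inv] at h6
      exact absurd h6 (not_lt.mpr h2.le)
  exact h.nn (π t) x h3 hx (by rw [h.inv]; exact hlt)

theorem good_swap {S T : Finset (Fin n)} {x t : Fin n} {s k : ℕ} {π ρ : Equiv.Perm (Fin n)}
    (c : Cfg S T x) (htT : t ∈ T) (htm : ∀ y ∈ T, y ≤ t)
    (hπx : π x = t) (hπt : π t = x) (hρx : ρ x = x) (hρt : ρ t = t)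
    (hr : ∀ y, y ≠ x → y ≠ t → π y = ρ y) :
    Good S T s k π ↔ Good ((S.erase x).erase t) (T.erase t) s k ρ := by
  have hxt := c.up t htT x c.xS c.xT
  have hπn : ∀ y, y ≠ x → y ≠ t → π y ≠ x ∧ π y ≠ t := by
    intro y h1 h2
    exact ⟨fun h => h2 (π.injective (h.trans hπt.symm)),
      fun h => h1 (π.injective (h.trans hπx.symm))⟩
  have hcov : (∀ y ∈ T, y ≠ t → π y < y) → covS S π = covS ((S.erase x).erase t) ρ := by
    intro htop
    ext ⟨a, b⟩
    simp only [covS, mem_filter, mem_univ, true_and, mem_erase]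
    constructor
    · rintro ⟨h1, h2, h3, h4⟩
      have hbx : b ≠ x := by rintro rfl; rw [hπx] at h2; exact absurd h2 hxt.ne'
      have hbt : b ≠ t := by rintro rfl; rw [hπt] at h2; exact absurd h2 hxt.ne
      refine ⟨⟨hbt, hbx, h1⟩, by rw [← hr b hbx hbt]; exact h2, h3, ?_⟩
      have hax : a ≠ x := by
        rintro rfl
        have := htop b (c.gt h1 h3) hbt
        rw [h2] at this
        exact lt_irrefl _ this
      have hat : a ≠ t := by
        rintro rfl
        rw [hπt] at h4
        exact absurd (h3.trans h4) (not_lt.mpr hxt.le)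
      rwa [← hr a hax hat]
    · rintro ⟨⟨hbt, hbx, h1⟩, h2, h3, h4⟩
      refine ⟨h1, by rw [hr b hbx hbt]; exact h2, h3, ?_⟩
      have hax : a ≠ x := by
        rintro rfl
        rw [hρx] at h4
        exact absurd h3 (not_lt.mpr h4.le)
      have hat : a ≠ t := by
        rintro rfl
        rw [hρt] at h4
        exact absurd h3 (not_lt.mpr h4.le)
      rwa [hr a hax hat]
  have hfix : (S.filter fun b => π b = b) = (((S.erase x).erase t).filter fun b => ρ b = b) := by
    ext b
    simp only [mem_filter, mem_erase]
    constructor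
    · rintro ⟨h1, h2⟩
      have hbx : b ≠ x := by rintro rfl; rw [hπx] at h2; exact absurd h2 hxt.ne'
      have hbt : b ≠ t := by rintro rfl; rw [hπt] at h2; exact absurd h2 hxt.ne
      exact ⟨⟨hbt, hbx, h1⟩, by rw [← hr b hbx hbt]; exact h2⟩
    · rintro ⟨⟨hbt, hbx, h1⟩, h2⟩
      exact ⟨h1, by rw [hr b hbx hbt]; exact h2⟩
  constructor
  · intro h
    refine ⟨?_, ?_, ?_, ?_, ?_, ?_⟩
    · intro i
      by_cases h1 : i = x
      · rw [h1, hρx, hρx]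
      by_cases h2 : i = t
      · rw [h2, hρt, hρt]
      obtain ⟨h3, h4⟩ := hπn i h1 h2
      rw [← hr i h1 h2, ← hr _ h3 h4, h.inv]
    · intro i hi
      by_cases h1 : i = x
      · rw [h1, hρx]
      by_cases h2 : i = t
      · rw [h2, hρt]
      rw [← hr i h1 h2]
      exact h.out i (fun hc => hi (by simp [h1, h2, hc]))
    · intro y hy
      have h2 := (mem_erase.1 hy).1
      have h3 := (mem_erase.1 hy).2
      have h1 : y ≠ x := by rintro rfl; exact c.xT h3
      rw [← hr y h1 h2]
      exact h.top y h3
    · intro a b h1 h2 h3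
      have hbx : b ≠ x := by rintro rfl; rw [hρx] at h2; exact lt_irrefl _ h2
      have hbt : b ≠ t := by rintro rfl; rw [hρt] at h2; exact lt_irrefl _ h2
      have hab : a < ρ a := h1.trans (h2.trans h3)
      have hax : a ≠ x := by rintro rfl; rw [hρx] at hab; exact lt_irrefl _ hab
      have hat : a ≠ t := by rintro rfl; rw [hρt] at hab; exact lt_irrefl _ hab
      rw [← hr b hbx hbt] at h2 h3
      rw [← hr a hax hat] at h3
      exact h.nn a b h1 h2 h3
    · rw [← hcov (fun y hy _ => h.top y hy), h.cov]
    · rw [← hfix, h.fix]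
  · intro h
    have htop : ∀ y ∈ T, π y < y := by
      intro y hy
      by_cases h2 : y = t
      · rw [h2, hπt]; exact hxt
      have h1 : y ≠ x := by rintro rfl; exact c.xT hy
      rw [hr y h1 h2]
      exact h.top y (mem_erase.2 ⟨h2, hy⟩)
    refine ⟨?_, ?_, htop, ?_, ?_, ?_⟩
    · intro i
      by_cases h1 : i = x
      · rw [h1, hπx, hπt]
      by_cases h2 : i = t
      · rw [h2, hπt, hπx]
      obtain ⟨h3, h4⟩ := hπn i h1 h2
      rw [hr _ h3 h4, hr i h1 h2, h.inv]
    · intro i hi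
      have h1 : i ≠ x := by rintro rfl; exact hi c.xS
      have h2 : i ≠ t := by rintro rfl; exact hi (c.sub htT)
      rw [hr i h1 h2]
      exact h.out i (fun hc => hi (mem_of_mem_erase (mem_of_mem_erase hc)))
    · intro a b h1 h2 h3
      have hbt : b ≠ t := by rintro rfl; rw [hπt] at h2; exact absurd h2 (not_lt.mpr hxt.le)
      have hat : a ≠ t := by
        rintro rfl; rw [hπt] at h3
        exact absurd (h1.trans (h2.trans h3)) (not_lt.mpr hxt.le)
      by_cases hbx : b = x
      · subst hbx
        have hax : a ≠ b := h1.ne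
        rw [hπx, hr a hax hat] at h3
        have haS : ρ a ∈ (S.erase b).erase t := by
          apply h.mem
          by_contra hc
          have := h.out a hc
          rw [this] at h3
          exact absurd (h1.trans hxt) (not_lt.mpr h3.le)
        simp only [mem_erase] at haS
        have := htm _ (c.gt haS.2.2 (hxt.trans h3))
        exact absurd h3 (not_lt.mpr this)
      · by_cases hax : a = x
        · subst hax
          have hbS : b ∈ S := by
            by_contra hc
            have := h.out b (fun hc' => hc (mem_of_mem_erase (mem_of_mem_erase hc')))
            rw [hr b hbx hbt, this] at h2
            exact lt_irrefl _ h2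
          exact absurd (htop b (c.gt hbS h1)) (not_lt.mpr h2.le)
        · rw [hr b hbx hbt] at h2 h3
          rw [hr a hax hat] at h3
          exact h.nn a b h1 h2 h3
    · rw [hcov (fun y hy _ => htop y hy), h.cov]
    · rw [hfix, h.fix]

theorem card_gt {S T : Finset (Fin n)} {x t : Fin n} {s k : ℕ}
    (c : Cfg S T x) (htT : t ∈ T) (htm : ∀ y ∈ T, y ≤ t) :
    ((GS S T s k).filter fun π => x < π x).card
      = (GS ((S.erase x).erase t) (T.erase t) s k).card := by
  have hxt := c.up t htT x c.xS c.xT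
  apply card_bij' (fun π _ => Equiv.swap x t * π) (fun π _ => Equiv.swap x t * π)
  · intro π hπ
    simp only [mem_filter, mem_GS] at hπ ⊢
    obtain ⟨h, hx⟩ := hπ
    have e := good_gt c htT htm h hx
    have e' : π t = x := by rw [← e, h.inv]
    refine (good_swap c htT htm e e' (by simp [e]) (by simp [e']) ?_).1 h
    intro y h1 h2
    simp only [Equiv.Perm.mul_apply]
    rw [Equiv.swap_apply_of_ne_of_ne]
    · rw [← e']; exact fun hc => h2 (π.injective hc)
    · rw [← e]; exact fun hc => h1 (π.injective hc)
  · intro π h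
    simp only [mem_filter, mem_GS] at h ⊢
    have e : π x = x := h.out x (by simp)
    have e' : π t = t := h.out t (by simp)
    refine ⟨(good_swap c htT htm (by simp [e]) (by simp [e']) e e' ?_).2 h, by simpa [e] using hxt⟩
    intro y h1 h2
    simp only [Equiv.Perm.mul_apply]
    rw [Equiv.swap_apply_of_ne_of_ne]
    · intro hc; exact h1 (π.injective (hc.trans e.symm))
    · intro hc; exact h2 (π.injective (hc.trans e'.symm))
  · intro π _; simp [← mul_assoc]
  · intro π _; simp [← mul_assoc]

theorem card_split (S T : Finset (Fin n)) (x : Fin n) (s k : ℕ) :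
    (GS S T s k).card = (GS S (insert x T) s k).card
      + ((GS S T s k).filter fun π => π x = x).card
      + ((GS S T s k).filter fun π => x < π x).card := by
  have h1 : (GS S (insert x T) s k) = (GS S T s k).filter fun π => π x < x := by
    ext π; simp [mem_GS, good_lt]
  rw [h1, ← card_union_of_disjoint, ← card_union_of_disjoint]
  · congr 1
    ext π
    simp only [mem_union, mem_filter]
    have := lt_trichotomy (π x) x
    tauto
  · rw [disjoint_left]
    intro π
    simp only [mem_union, mem_filter]
    rintro (⟨_, h⟩ | ⟨_, h⟩) ⟨_, h'⟩
    · exact absurd h (not_lt.mpr h'.le)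
    · exact absurd h h'.ne'
  · rw [disjoint_left]
    intro π
    simp only [mem_filter]
    rintro ⟨_, h⟩ ⟨_, h'⟩
    exact absurd h' h.ne

theorem card_eq {S T : Finset (Fin n)} {x : Fin n} (s k : ℕ) (c : Cfg S T x) :
    ((GS S T (s + T.card) (k + 1)).filter fun π => π x = x).card = (GS (S.erase x) T s k).card := by
  congr 1
  ext π
  simp only [mem_filter, mem_GS]
  exact good_eq c

theorem card_eq0 {S T : Finset (Fin n)} {x : Fin n} (s k : ℕ) (c : Cfg S T x)
    (h : s < T.card ∨ k = 0) :
    ((GS S T s k).filter fun π => π x = x).card = 0 := by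
  rw [card_eq_zero, filter_eq_empty_iff]
  intro π hπ hx
  have := good_eq' c (mem_GS.1 hπ) hx
  omega

theorem card_gt0 {S : Finset (Fin n)} {x : Fin n} (s k : ℕ) (c : Cfg S ∅ x) :
    ((GS S ∅ s k).filter fun π => x < π x).card = 0 := by
  rw [card_eq_zero, filter_eq_empty_iff]
  intro π hπ hx
  have := c.gt ((mem_GS.1 hπ).mem c.xS) hx
  simp at this

theorem card_base (S : Finset (Fin n)) (s k : ℕ) :
    (GS S S s k).card = if S = ∅ ∧ s = 0 ∧ k = 0 then 1 else 0 := by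
  by_cases hS : S = ∅
  · subst hS
    by_cases hs : s = 0 ∧ k = 0
    · obtain ⟨rfl, rfl⟩ := hs
      simp only [and_self, if_true]
      rw [card_eq_one]
      refine ⟨1, ?_⟩
      ext π
      simp only [mem_GS, mem_singleton]
      constructor
      · intro h; ext i; rw [h.out i (by simp)]; rfl
      · rintro rfl
        refine ⟨by simp, by simp, by simp, ?_, by simp [covS], by simp⟩
        intro a b _ h; simp at h
    · rw [if_neg (by tauto), card_eq_zero, eq_empty_iff_forall_notMem]
      intro π h
      rw [mem_GS] at h
      apply hs
      refine ⟨?_, ?_⟩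
      · rw [← h.cov]; simp [covS]
      · rw [← h.fix]; simp
  · rw [if_neg (by tauto), card_eq_zero, eq_empty_iff_forall_notMem]
    intro π h
    rw [mem_GS] at h
    have hne := nonempty_iff_ne_empty.2 hS
    have h1 := h.top _ (min'_mem S hne)
    have h2 := min'_le S _ (h.mem (min'_mem S hne))
    exact absurd h1 (not_lt.mpr h2)

theorem main_count (m : ℕ) : ∀ (S T : Finset (Fin n)), T ⊆ S →
    (∀ t ∈ T, ∀ y ∈ S, y ∉ T → y < t) → (S \ T).card = m → ∀ k,
    (GS S T 0 k).card = bal m (T.card + k) ∧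
    (GS S T 1 k).card = k * bal m (T.card + k + 2) +
      (if T.card = 0 ∨ k = 0 then 0 else bal m (T.card + k)) := by
  induction m with
  | zero =>
    intro S T hsub hup hm k
    have : S = T := by
      rw [card_eq_zero, sdiff_eq_empty_iff_subset] at hm
      exact subset_antisymm hm hsub
    subst this
    rw [card_base, card_base]
    by_cases hS : S = ∅
    · subst hS
      cases k with
      | zero => simp [bal]
      | succ k => simp [bal]
    · have hc : S.card ≠ 0 := by rwa [Ne, card_eq_zero]
      rw [bal_gt 0 (S.card + k) (by omega), bal_gt 0 (S.card + k + 2) (by omega)]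
      simp [hS]
  | succ m ih =>
    intro S T hsub hup hm k
    have hne : (S \ T).Nonempty := by rw [← card_pos]; omega
    obtain ⟨x, hx⟩ : ∃ x, x = (S \ T).max' hne := ⟨_, rfl⟩
    have hxm : x ∈ S \ T := hx ▸ max'_mem _ hne
    have hxm' := mem_sdiff.1 hxm
    have c : Cfg S T x := ⟨hsub, hup, hxm'.1, hxm'.2, fun y h1 h2 =>
      hx ▸ le_max' _ _ (mem_sdiff.2 ⟨h1, h2⟩)⟩
    have ih1 := ih S (insert x T) (insert_subset c.xS hsub) (by
      intro t ht y hy hyT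
      simp only [mem_insert, not_or] at ht hyT
      rcases ht with rfl | ht
      · exact lt_of_le_of_ne (c.mx y hy hyT.2) hyT.1
      · exact hup t ht y hy hyT.2) (by
      rw [sdiff_insert, card_erase_of_mem hxm, hm]; rfl) k
    rw [card_insert_of_notMem c.xT] at ih1
    have ih2 := ih (S.erase x) T (by
      intro y hy
      exact mem_erase.2 ⟨by rintro rfl; exact c.xT hy, hsub hy⟩) (by
      intro t ht y hy hyT
      exact hup t ht y (mem_of_mem_erase hy) hyT) (by
      rw [erase_sdiff_comm, card_erase_of_mem hxm, hm]; rfl)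
    rw [card_split S T x 0 k, card_split S T x 1 k, ih1.1, ih1.2]
    rcases T.eq_empty_or_nonempty with rfl | hTne
    · rw [card_gt0 _ _ c, card_gt0 _ _ c]
      cases k with
      | zero =>
        rw [card_eq0 _ _ c (Or.inr rfl), card_eq0 _ _ c (Or.inr rfl)]
        simp [bal]
      | succ k =>
        have e0 := card_eq 0 k c
        have e1 := card_eq 1 k c
        simp only [card_empty, add_zero, zero_add] at e0 e1 ih2 ⊢
        rw [e0, e1, (ih2 k).1, (ih2 k).2]
        simp [bal]
        constructor
        · rw [show 1 + (k + 1) = k + 2 by omega]; omega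
        · rw [show 1 + (k + 1) + 2 = k + 2 + 2 by omega, show 1 + (k + 1) = k + 2 by omega]; ring
    · obtain ⟨t, ht⟩ : ∃ t, t = T.max' hTne := ⟨_, rfl⟩
      have htT : t ∈ T := ht ▸ max'_mem _ hTne
      have htm : ∀ y ∈ T, y ≤ t := fun y hy => ht ▸ le_max' _ _ hy
      have ih3 := ih ((S.erase x).erase t) (T.erase t) (by
        apply erase_subset_erase
        intro y hy
        exact mem_erase.2 ⟨by rintro rfl; exact c.xT hy, hsub hy⟩) (by
        intro u hu y hy hyT
        simp only [mem_erase] at hu hy hyT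
        exact hup u hu.2 y hy.2.2 (fun hc => hyT ⟨hy.1, hc⟩)) (by
        have : ((S.erase x).erase t) \ (T.erase t) = (S \ T).erase x := by
          ext y
          simp only [mem_sdiff, mem_erase]
          constructor
          · rintro ⟨⟨h1, h2, h3⟩, h4⟩
            exact ⟨h2, h3, fun hc => h4 ⟨h1, hc⟩⟩
          · rintro ⟨h1, h2, h3⟩
            exact ⟨⟨by rintro rfl; exact h3 htT, h1, h2⟩, fun hc => h3 hc.2⟩
        rw [this, card_erase_of_mem hxm, hm]; rfl) k
      rw [card_gt c htT htm, card_gt c htT htm, ih3.1, ih3.2, card_erase_of_mem htT]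
      have hpos : 0 < T.card := card_pos.2 hTne
      rw [card_eq0 0 k c (Or.inl hpos)]
      obtain ⟨h, hh⟩ : ∃ h, T.card = h + 1 := ⟨T.card - 1, by omega⟩
      rw [hh]
      refine ⟨?_, ?_⟩
      · rw [show h + 1 + 1 + k = h + k + 2 by omega, show h + 1 - 1 + k = h + k by omega,
          show h + 1 + k = h + k + 1 by omega]
        simp only [bal]; omega
      · have key : ((GS S T 1 k).filter fun π => π x = x).card =
            if h = 0 ∧ k ≠ 0 then bal m (h + k) else 0 := by
          by_cases hk : k = 0
          · rw [card_eq0 1 k c (Or.inr hk)]; simp [hk]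
          · by_cases h0 : h = 0
            · obtain ⟨k, rfl⟩ := Nat.exists_eq_succ_of_ne_zero hk
              have e := card_eq 0 k c
              rw [hh, h0] at e
              simp only [zero_add] at e
              rw [Nat.succ_eq_add_one, e, (ih2 k).1, hh, h0]
              simp
              congr 1; omega
            · rw [card_eq0 1 k c (Or.inl (by omega))]; simp [h0]
        rw [key]
        rw [show h + 1 + 1 + k + 2 = h + k + 4 by omega, show h + 1 - 1 + k + 2 = h + k + 2 by omega,
          show h + 1 + k + 2 = h + k + 3 by omega, show h + 1 + 1 + k = h + k + 2 by omega,
          show h + 1 - 1 + k = h + k by omega, show h + 1 + k = h + k + 1 by omega,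
          show h + 1 - 1 = h by omega]
        by_cases hk : k = 0
        · simp [hk]
        · by_cases h0 : h = 0
          · simp [hk, h0, bal]; ring
          · simp [hk, h0, bal]; ring

theorem occ_iff_s18 (π : Equiv.Perm (Fin n)) (hi : ∀ i, π (π i) = i) :
    occ321 π = 1 ↔ NN π ∧ (covS univ π).card = 1 := by
  have hocc : occ321 π = 1 ↔ ∃! t : Fin n × Fin n × Fin n,
      t.1 < t.2.1 ∧ t.2.1 < t.2.2 ∧ (π t.2.2 < π t.2.1 ∧ π t.2.1 < π t.1) := by
    unfold occ321
    rw [Nat.card_eq_one_iff_unique, ← unique_subtype_iff_existsUnique,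
      unique_iff_subsingleton_and_nonempty]
  have hcov : (covS univ π).card = 1 ↔ ∃! p : Fin n × Fin n,
      π p.2 = p.2 ∧ p.1 < p.2 ∧ p.2 < π p.1 := by
    rw [card_eq_one, singleton_iff_unique_mem]
    simp [covS]
  rw [hocc, hcov]
  constructor
  · rintro ⟨⟨i, j, l⟩, ⟨h1, h2, h3, h4⟩, hu⟩
    simp only at h1 h2 h3 h4
    have hnn : NN π := by
      intro a b g1 g2 g3
      have u1 := hu (a, b, π a) ⟨g1, g2.trans g3, by simpa [hi] using g1.trans g2, g3⟩
      have u2 := hu (a, π b, π a) ⟨g1.trans g2, g3, by simpa [hi] using g1,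
        by simpa [hi] using g2.trans g3⟩
      have := u1.trans u2.symm
      simp only [Prod.mk.injEq] at this
      exact g2.ne this.2.1
    refine ⟨hnn, ?_⟩
    have u := hu (π l, π j, π i) ⟨h3, h4, by simpa [hi] using h1, by simpa [hi] using h2⟩
    simp only [Prod.mk.injEq] at u
    obtain ⟨u1, u2, u3⟩ := u
    refine ⟨(i, j), ⟨u2, h1, by rw [u3]; exact h2⟩, ?_⟩
    rintro ⟨a, b⟩ ⟨g1, g2, g3⟩
    simp only at g1 g2 g3
    have := hu (a, b, π a) ⟨g2, g3, by simpa [hi, g1] using g2, by simpa [g1] using g3⟩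
    simp only [Prod.mk.injEq] at this
    rw [this.1, this.2.1]
  · rintro ⟨hnn, ⟨a, b⟩, ⟨g1, g2, g3⟩, hu⟩
    simp only at g1 g2 g3
    refine ⟨(a, b, π a), ⟨g2, g3, by simpa [hi, g1] using g2, by simpa [g1] using g3⟩, ?_⟩
    rintro ⟨i, j, l⟩ ⟨h1, h2, h3, h4⟩
    simp only at h1 h2 h3 h4
    have hj : π j = j := by
      rcases lt_trichotomy (π j) j with h | h | h
      · exact (hnn (π l) (π j) h3 (by rw [hi]; exact h) (by rw [hi, hi]; exact h2)).elim
      · exact h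
      · exact (hnn i j h1 h h4).elim
    rw [hj] at h3 h4
    have v1 := hu (i, j) ⟨hj, h1, h4⟩
    have v2 := hu (π l, j) ⟨hj, h3, by simpa [hi] using h2⟩
    simp only [Prod.mk.injEq] at v1 v2
    rw [v1.1, v1.2, ← v2.1, hi]

theorem count_eq_s18 (n k : ℕ) : iCountOnce321 n k = k * bal n (k + 2) := by
  have h := (main_count n (univ : Finset (Fin n)) ∅ (by simp) (by simp) (by simp) k).2
  simp only [card_empty, zero_add, true_or, if_true, add_zero] at h
  rw [← h]
  unfold iCountOnce321
  classical
  rw [Nat.card_eq_fintype_card, Fintype.card_subtype]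
  congr 1
  ext π
  simp only [mem_filter, mem_univ, true_and, mem_GS]
  constructor
  · rintro ⟨h1, h2, h3⟩
    have := (occ_iff_s18 π h1).1 h2
    exact ⟨h1, by simp, by simp, this.1, this.2, h3⟩
  · intro h
    exact ⟨h.inv, (occ_iff_s18 π h.inv).2 ⟨h.nn, h.cov⟩, h.fix⟩

/-- For all `n ≥ 3` and `0 ≤ k ≤ n` with `n + k` even,
`(n+1) · i_n^k(∅;321) = k(k+3) · C(n+1, (n-k)/2 - 1)`, where `C(n+1, (n-k)/2 - 1)`
is interpreted as `0` when `(n-k)/2 - 1` is negative (i.e. when `k = n`); when `n + k` is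
odd, `i_n^k(∅;321) = 0`. -/
theorem statement18 (n k : ℕ) (hn : 3 ≤ n) (hk : k ≤ n) :
    (Even (n + k) → (n + 1) * iCountOnce321 n k =
      k * (k + 3) * (if (n - k) / 2 = 0 then 0 else (n + 1).choose ((n - k) / 2 - 1))) ∧
    (Odd (n + k) → iCountOnce321 n k = 0) := by
  rw [count_eq_s18]
  constructor
  · intro he
    split_ifs with h0
    · rw [bal_gt n (k + 2) (by omega)]; simp
    · obtain ⟨i, hi⟩ : ∃ i, (n - k) / 2 = i + 1 := ⟨(n - k) / 2 - 1, by omega⟩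
      have e : n = k + 2 + 2 * i := by
        obtain ⟨r, hr⟩ := he
        omega
      rw [hi, Nat.add_sub_cancel]
      have := bal_closed i (k + 2)
      rw [← e] at this
      rw [show k * (k + 3) * (n + 1).choose i = k * ((k + 2 + 1) * (n + 1).choose i) by ring,
        ← this]
      ring
  · intro ho
    rw [bal_odd n (k + 2) (by grind)]; simp
end

section
/- For all integers n ≥ 2 and 0 ≤ k ≤ n with n + k even, the following binomial–Catalan identity holds: ((k+3)/(n+1))·C(n+1, (n-k)/2 - 1) = Σ_{i=1}^{(n-k)/2} ((k+1)/(n-2i+1))·C(n-2i+1, (n-k-2i)/2)·C_i, where each summand ((k+1)/(m+1))·C(m+1, j) (with m = n-2i, j = (n-k-2i)/2) is the integer (k+1)·C(m+1, j)/(m+1); equivalently, the same identity holds after multiplying both sides by (n+1)·∏(n-2i+1). -/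
open PowerSeries in
/-- ballot numbers -/
noncomputable def ballotB (k m : ℕ) : ℚ :=
  ((k : ℚ) + 1) / ((k + 2 * m + 1 : ℕ) : ℚ) * ((k + 2 * m + 1).choose m : ℚ)

lemma ballotB_zero_right (k : ℕ) : ballotB k 0 = 1 := by
  have : (k : ℚ) + 1 ≠ 0 := by positivity
  simp [ballotB, this]

lemma ballotB_rec (k m : ℕ) :
    ballotB (k + 1) (m + 1) = ballotB k (m + 1) + ballotB (k + 2) m := by
  unfold ballotB
  rw [show k + 1 + 2 * (m + 1) + 1 = (k + 2 * m + 3) + 1 by ring,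
    show k + 2 * (m + 1) + 1 = k + 2 * m + 3 by ring,
    show k + 2 + 2 * m + 1 = k + 2 * m + 3 by ring, Nat.choose_succ_succ]
  have h := Nat.choose_succ_right_eq (k + 2 * m + 3) m
  rw [show k + 2 * m + 3 - m = k + m + 3 by omega] at h
  have h' : ((k + 2 * m + 3).choose (m + 1) : ℚ) =
      ((k + 2 * m + 3).choose m : ℚ) * (k + m + 3) / (m + 1) := by
    rw [eq_div_iff (by positivity)]
    exact_mod_cast h
  push_cast
  rw [h']
  field_simp
  ring

lemma ballotB_zero_left (m : ℕ) : ballotB 0 m = catalan m := by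
  have h3 := succ_mul_catalan_eq_centralBinom m
  rw [Nat.centralBinom] at h3
  have h4 := Nat.choose_mul_succ_eq (2 * m) m
  rw [show 2 * m + 1 - m = m + 1 by omega, ← h3] at h4
  unfold ballotB
  have h5 : ((m : ℚ) + 1) * catalan m * (2 * m + 1) = (2 * m + 1).choose m * (m + 1) := by
    exact_mod_cast h4
  have h6 : (m : ℚ) + 1 ≠ 0 := by positivity
  have h7 : (catalan m : ℚ) * (2 * m + 1) = (2 * m + 1).choose m := by
    apply mul_left_cancel₀ h6; linarith
  simp only [Nat.zero_add]
  rw [← h7]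
  push_cast
  field_simp
  ring

lemma ballotB_one_left (m : ℕ) : ballotB 1 m = ballotB 0 (m + 1) := by
  unfold ballotB
  rw [show 1 + 2 * m + 1 = 2 * m + 2 by ring, show 0 + 2 * (m + 1) + 1 = 2 * m + 2 + 1 by ring]
  have h := Nat.add_one_mul_choose_eq (2 * m + 2) m
  have h' : ((2 * m + 2 + 1).choose (m + 1) : ℚ) =
      (2 * m + 3) * (2 * m + 2).choose m / (m + 1) := by
    rw [eq_div_iff (by positivity)]
    have : ((2 * m + 2 + 1 : ℕ) : ℚ) * (2 * m + 2).choose m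
      = (2 * m + 2 + 1).choose (m + 1) * (m + 1) := by exact_mod_cast h
    rw [← this]; push_cast; ring
  rw [h']
  push_cast
  field_simp
  ring

open PowerSeries in
/-- generating function of ballot numbers -/
noncomputable def ballotF (k : ℕ) : PowerSeries ℚ := PowerSeries.mk (ballotB k)

open PowerSeries in
lemma ballotF_rec (k : ℕ) : ballotF (k + 1) = ballotF k + X * ballotF (k + 2) := by
  ext m
  cases m with
  | zero => simp [ballotF, ballotB_zero_right]
  | succ m => simp [ballotF, coeff_succ_X_mul, ballotB_rec]

open PowerSeries in
lemma ballotF_zero : ballotF 0 = 1 + X * ballotF 1 := by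
  ext m
  cases m with
  | zero => simp [ballotF, ballotB_zero_right]
  | succ m => simp [ballotF, coeff_succ_X_mul, ballotB_one_left, coeff_one]

open PowerSeries in
lemma ballotF_sq : ballotF 0 = 1 + X * ballotF 0 ^ 2 := by
  ext m
  cases m with
  | zero => simp [ballotF, ballotB_zero_right]
  | succ m =>
    rw [map_add, coeff_succ_X_mul, sq, coeff_mul]
    simp [ballotF, coeff_one, ballotB_zero_left, catalan_succ']

open PowerSeries in
lemma ballotF_pow (k : ℕ) : ballotF k = ballotF 0 ^ (k + 1) := by
  induction k using Nat.twoStepInduction with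
  | zero => simp
  | one =>
    apply mul_left_cancel₀ (X_ne_zero (R := ℚ))
    have h1 := ballotF_zero
    have h2 := ballotF_sq
    linear_combination h2 - h1
  | more k h1 h2 =>
    apply mul_left_cancel₀ (X_ne_zero (R := ℚ))
    have h3 := ballotF_rec k
    have h4 := ballotF_sq
    rw [h1, h2] at h3
    linear_combination ballotF 0 ^ (k + 1) * h4 - h3

open PowerSeries in
lemma ballotB_conv (k m : ℕ) :
    ballotB (k + 1) m = ∑ i ∈ Finset.range (m + 1), ballotB k (m - i) * catalan i := by
  have h : ballotF (k + 1) = ballotF 0 * ballotF k := by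
    rw [ballotF_pow (k + 1), ballotF_pow k]; ring
  have h2 := congrArg (coeff m) h
  rw [coeff_mul, Finset.Nat.sum_antidiagonal_eq_sum_range_succ_mk] at h2
  simpa [ballotF, ballotB_zero_left, mul_comm] using h2


/-- For all `n ≥ 2` and `0 ≤ k ≤ n` with `n + k` even,
`((k+3)/(n+1)) · C(n+1, (n-k)/2 - 1)
  = ∑_{i=1}^{(n-k)/2} ((k+1)/(n-2i+1)) · C(n-2i+1, (n-k-2i)/2) · C_i`,
where `C(n+1, (n-k)/2 - 1)` is interpreted as `0` when `(n-k)/2 - 1` is negative (i.e.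
when `k = n`), and `C_i` is the `i`-th Catalan number.  Stated over `ℚ`. -/
theorem statement19 (n k : ℕ) (hn : 2 ≤ n) (hk : k ≤ n) (hpar : Even (n + k)) :
    ((k : ℚ) + 3) / ((n : ℚ) + 1) *
        (if (n - k) / 2 = 0 then 0 else ((n + 1).choose ((n - k) / 2 - 1) : ℚ)) =
      ∑ i ∈ Finset.Icc 1 ((n - k) / 2),
        ((k : ℚ) + 1) / ((n - 2 * i + 1 : ℕ) : ℚ) *
          ((n - 2 * i + 1).choose ((n - k - 2 * i) / 2) : ℚ) * (catalan i : ℚ) := by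
  obtain ⟨m, rfl⟩ : ∃ m, n = k + 2 * m := by
    obtain ⟨c, hc⟩ := hpar
    exact ⟨c - k, by omega⟩
  have e : (k + 2 * m - k) / 2 = m := by omega
  rw [e]
  have hs : ∀ i ∈ Finset.Icc 1 m, ((k : ℚ) + 1) / ((k + 2 * m - 2 * i + 1 : ℕ) : ℚ) *
          ((k + 2 * m - 2 * i + 1).choose ((k + 2 * m - k - 2 * i) / 2) : ℚ) * (catalan i : ℚ)
          = ballotB k (m - i) * catalan i := by
    intro i hi
    rw [Finset.mem_Icc] at hi
    unfold ballotB
    rw [show k + 2 * m - 2 * i + 1 = k + 2 * (m - i) + 1 by omega,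
      show (k + 2 * m - k - 2 * i) / 2 = m - i by omega]
  rw [Finset.sum_congr rfl hs]
  cases m with
  | zero => simp
  | succ m =>
    have h := ballotB_conv k (m + 1)
    rw [ballotB_rec, Finset.range_eq_Ico, Finset.sum_eq_sum_Ico_succ_bot (by omega)] at h
    simp only [Nat.sub_zero, catalan_zero, Nat.cast_one, mul_one, add_right_inj] at h
    have h2 : Finset.Icc 1 (m + 1) = Finset.Ico (0 + 1) (m + 1 + 1) := by
      ext; simp only [Finset.mem_Icc, Finset.mem_Ico]; omega
    rw [h2, ← h]
    unfold ballotB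
    rw [if_neg (by omega), show k + 2 + 2 * m + 1 = k + 2 * (m + 1) + 1 by ring]
    simp only [Nat.add_sub_cancel]
    push_cast
    ring
end
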